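/- Let a be a ribbon with n nodes and signature σ = σ(a). Then every extension of a has at least 1 − σ/2 critical points in the open unit disk, and there exists an extension of a with at most n − 1 − σ/2 critical points; consequently 1 − σ/2 ≤ γ(a) ≤ n − 1 − σ/2. -/

import Mathlib

open scoped RealInnerProductSpace

noncomputable section

abbrev E2 : Type := EuclideanSpace ℝ (Fin 2)

/-- The point (cos t, sin t) on the unit circle in ℝ². -/
def sphPt (t : ℝ) : E2 := (EuclideanSpace.equiv (Fin 2) ℝ).symm ![Real.cos t, Real.sin t]

/-- A ribbon with `n` nodes, encoded via the angle parametrization `g = φ ∘ (cos, sin)`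
of a C^∞ function `φ : S¹ → ℝ` whose critical points on the circle are exactly the `n`
nondegenerate local extrema (nodes) at angles `θ 0 < θ 1 < ⋯ < θ (n-1)` in `[0, 2π)`,
with pairwise distinct critical values, together with a marking `ν` of the nodes by `±1`. -/
structure Ribbon (n : ℕ) : Type where
  g : ℝ → ℝ
  θ : Fin n → ℝ
  ν : Fin n → ℤ
  n_even : Even n
  n_pos : 0 < n
  smooth_g : ContDiff ℝ (⊤ : ℕ∞) g
  periodic_g : Function.Periodic g (2 * Real.pi)
  theta_mem : ∀ i, θ i ∈ Set.Ico (0 : ℝ) (2 * Real.pi)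
  theta_mono : StrictMono θ
  node_crit : ∀ i, deriv g (θ i) = 0
  node_nondeg : ∀ i, deriv (deriv g) (θ i) ≠ 0
  crit_only : ∀ t ∈ Set.Ico (0 : ℝ) (2 * Real.pi), deriv g t = 0 → ∃ i, t = θ i
  values_distinct : ∀ i j, g (θ i) = g (θ j) → i = j
  nu_sign : ∀ i, ν i = 1 ∨ ν i = -1

/-- The signature σ = s₊ − s₋ of a ribbon. -/
def Ribbon.sigma {n : ℕ} (a : Ribbon n) : ℤ := ∑ i, a.ν i

/-- Critical points of `f` in the open unit disk. -/
def critPts (f : E2 → ℝ) : Set E2 :=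
  {x | x ∈ Metric.ball (0 : E2) 1 ∧ fderiv ℝ f x = 0}

/-- `f : ℝ² → ℝ` is an extension of the ribbon `a`: it is C^∞, agrees with `φ` on the unit
circle, has nowhere-vanishing gradient on the circle, and at each node the radial derivative
`⟪∇f(p), p⟫` has sign `ν p` if `p` is a local maximum of `φ` (second derivative of `g`
negative there) and sign `−ν p` if `p` is a local minimum of `φ`. -/
def IsExtension {n : ℕ} (a : Ribbon n) (f : E2 → ℝ) : Prop :=
  ContDiff ℝ (⊤ : ℕ∞) f ∧
  (∀ t : ℝ, f (sphPt t) = a.g t) ∧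
  (∀ x ∈ Metric.sphere (0 : E2) 1, fderiv ℝ f x ≠ 0) ∧
  (∀ i : Fin n,
    (deriv (deriv a.g) (a.θ i) < 0 →
      0 < (a.ν i : ℝ) * ⟪gradient f (sphPt (a.θ i)), sphPt (a.θ i)⟫) ∧
    (0 < deriv (deriv a.g) (a.θ i) →
      (a.ν i : ℝ) * ⟪gradient f (sphPt (a.θ i)), sphPt (a.θ i)⟫ < 0))

/-- The ribbon invariant γ: the infimum, over all extensions `f` of `a`, of the number of
critical points of `f` in the open unit disk (a value in `ℕ∞`). -/
def gammaR {n : ℕ} (a : Ribbon n) : ℕ∞ :=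
  sInf {k : ℕ∞ | ∃ f : E2 → ℝ, IsExtension a f ∧ (critPts f).encard = k}


lemma int_const {h : ℝ → ℝ} (hc : Continuous h) (hi : ∀ t, ∃ m : ℤ, h t = m) (s t : ℝ) :
    h s = h t := by
  choose m hm using hi
  have hmc : Continuous m := by
    rw [Int.isClosedEmbedding_coe_real.isInducing.continuous_iff]
    convert hc using 1
    ext t; exact (hm t).symm
  rw [hm, hm, PreconnectedSpace.constant inferInstance hmc]

lemma side_lem {G L : ℝ → ℂ} (hG : Continuous G) (hL : Continuous L)
    (hexp : ∀ t, Complex.exp (L t) = G t) (ω : ℝ)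
    (hpos : ∀ t, 0 ≤ t → t ≤ 1 → 0 < (G t * Complex.exp (-(ω : ℂ) * Complex.I)).re)
    {x0 x1 r0 r1 : ℝ} (h0 : |x0 - ω| < Real.pi) (h1 : |x1 - ω| < Real.pi)
    (hr0 : 0 < r0) (hr1 : 0 < r1)
    (hG0 : G 0 = r0 * Complex.exp (x0 * Complex.I))
    (hG1 : G 1 = r1 * Complex.exp (x1 * Complex.I)) :
    (L 1).im - (L 0).im = x1 - x0 := by
  set c : ℝ → ℝ := fun t => max 0 (min t 1) with hc
  have hcc : Continuous c := by fun_prop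
  have hc0 : ∀ t, 0 ≤ c t := fun t => le_max_left _ _
  have hc1 : ∀ t, c t ≤ 1 := fun t => by simp [hc]
  set K : ℝ → ℂ := fun t => G (c t) * Complex.exp (-(ω : ℂ) * Complex.I) with hK
  have hKc : Continuous K := by fun_prop
  have hlog : Continuous fun t => Complex.log (K t) := by
    refine hKc.clog fun t => ?_
    exact Or.inl (hpos _ (hc0 t) (hc1 t))
  have key : ∀ t, ∃ m : ℤ, ((L (c t)).im - ω - (Complex.log (K t)).im) / (2 * Real.pi) = m := by
    intro t
    have hK0 : K t ≠ 0 := by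
      intro h
      have := hpos _ (hc0 t) (hc1 t)
      simp only [hK] at h
      rw [h] at this; simp at this
    have : Complex.exp (L (c t) - ω * Complex.I) = Complex.exp (Complex.log (K t)) := by
      rw [Complex.exp_log hK0, Complex.exp_sub, hexp, hK, neg_mul, Complex.exp_neg]; rfl
    rw [Complex.exp_eq_exp_iff_exists_int] at this
    obtain ⟨m, hm⟩ := this
    refine ⟨m, ?_⟩
    have := congrArg Complex.im hm
    simp at this
    rw [this]; field_simp; ring
  have hcont : Continuous fun t => ((L (c t)).im - ω - (Complex.log (K t)).im) / (2 * Real.pi) := by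
    have : Continuous fun t => (L (c t)).im := Complex.continuous_im.comp (hL.comp hcc)
    have h2 : Continuous fun t => (Complex.log (K t)).im := Complex.continuous_im.comp hlog
    fun_prop
  have e := int_const hcont key 0 1
  have hl : ∀ x r : ℝ, |x - ω| < Real.pi → 0 < r → ∀ z : ℂ, z = r * Complex.exp (x * Complex.I) →
      (Complex.log (z * Complex.exp (-(ω : ℂ) * Complex.I))).im = x - ω := by
    intro x r hx hr z hz
    have : z * Complex.exp (-(ω : ℂ) * Complex.I)
        = Complex.exp (((Real.log r : ℝ) : ℂ) + ((x - ω : ℝ) : ℂ) * Complex.I) := by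
      rw [hz, Complex.exp_add, ← Complex.ofReal_exp, Real.exp_log hr, mul_assoc, ← Complex.exp_add]
      congr 2; push_cast; ring
    rw [abs_lt] at hx
    rw [this, Complex.log_exp]
    · simp
    · simp; linarith
    · simp; linarith
  have c0 : c 0 = 0 := by simp [hc]
  have c1 : c 1 = 1 := by simp [hc]
  simp only [hK, c0, c1] at e
  rw [hl x0 r0 h0 hr0 _ hG0, hl x1 r1 h1 hr1 _ hG1] at e
  have hp := Real.pi_pos
  rw [div_left_inj' (by positivity)] at e
  linarith

lemma exp_sub_exp (x y : ℝ) : Complex.exp (x * Complex.I) - Complex.exp (y * Complex.I)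
    = ((2 * Real.sin ((x - y) / 2) : ℝ) : ℂ) *
      Complex.exp (((x + y) / 2 + Real.pi / 2 : ℝ) * Complex.I) := by
  have h1 : Complex.exp (((x + y) / 2 + Real.pi / 2 : ℝ) * Complex.I)
      = Complex.I * Complex.exp (((x + y) / 2 : ℝ) * Complex.I) := by
    push_cast
    rw [add_mul, Complex.exp_add, Complex.exp_pi_div_two_mul_I]; ring
  have hx : (x : ℂ) * Complex.I = ((x + y) / 2 : ℝ) * Complex.I + ((x - y) / 2 : ℝ) * Complex.I := by
    push_cast; ring
  have hy : (y : ℂ) * Complex.I = ((x + y) / 2 : ℝ) * Complex.I - ((x - y) / 2 : ℝ) * Complex.I := by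
    push_cast; ring
  rw [h1, hx, hy, Complex.exp_add, sub_eq_add_neg (_ * _) (_ * _), Complex.exp_add, ← neg_mul (((x - y) / 2 : ℝ) : ℂ),
    Complex.exp_mul_I (((x - y) / 2 : ℝ) : ℂ), Complex.exp_mul_I (-(((x - y) / 2 : ℝ) : ℂ))]
  rw [Complex.cos_neg, Complex.sin_neg]
  push_cast
  ring

lemma half_plane {z : ℂ} (hz : ‖z‖ ≤ 1) (ω : ℝ) (hne : Complex.exp (ω * Complex.I) ≠ z) :
    0 < ((Complex.exp (ω * Complex.I) - z) * Complex.exp (-(ω : ℂ) * Complex.I)).re := by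
  have e1 : (Complex.exp (ω * Complex.I) - z) * Complex.exp (-(ω : ℂ) * Complex.I)
      = 1 - z * Complex.exp (-(ω : ℂ) * Complex.I) := by
    rw [sub_mul, ← Complex.exp_add]; simp
  set w := z * Complex.exp (-(ω : ℂ) * Complex.I) with hw
  have hwn : ‖w‖ ≤ 1 := by
    rw [hw, norm_mul]
    have : ‖Complex.exp (-(ω : ℂ) * Complex.I)‖ = 1 := by
      rw [← Complex.ofReal_neg, Complex.norm_exp_ofReal_mul_I]
    rw [this]; simpa using hz
  rw [e1]; simp
  have h1 : w.re ≤ 1 := (Complex.re_le_norm w).trans hwn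
  refine lt_of_le_of_ne h1 fun h => hne ?_
  have h2 : w.re ^ 2 + w.im ^ 2 ≤ 1 := by
    have := Complex.sq_norm w
    rw [Complex.normSq_apply] at this
    nlinarith [norm_nonneg w]
  have h3 : w.im = 0 := by
    rw [h] at h2; nlinarith [sq_nonneg w.im]
  have hw1 : w = 1 := Complex.ext (by simp [h]) (by simp [h3])
  have : z = w * Complex.exp (ω * Complex.I) := by
    rw [hw, mul_assoc, ← Complex.exp_add]; simp
  rw [this, hw1]; simp

lemma crossing {γ η : ℝ → ℂ} (hγ : Continuous γ) (hη : Continuous η)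
    (hγ1 : ∀ t, ‖γ t‖ ≤ 1) (hη1 : ∀ t, ‖η t‖ ≤ 1) (hne : ∀ s t, γ s ≠ η t)
    {α β δ : ℝ} (hδ : 0 < δ) (hb1 : α + δ < β) (hb2 : β < α - δ + 2 * Real.pi)
    (g0 : γ 0 = Complex.exp (α * Complex.I)) (g1 : γ 1 = Complex.exp (β * Complex.I))
    (e0 : η 0 = Complex.exp ((α - δ : ℝ) * Complex.I))
    (e1 : η 1 = Complex.exp ((α + δ : ℝ) * Complex.I)) : False := by
  have hp := Real.pi_pos
  obtain ⟨L, hL, hLe⟩ := Complex.exists_continuousOn_eqOn_exp_comp (X := ℝ × ℝ) (U := Set.univ)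
    (by have : SimplyConnectedSpace (ℝ × ℝ) := inferInstance
        have h2 := (Homeomorph.Set.univ (ℝ × ℝ)).toHomotopyEquiv.simplyConnectedSpace
        exact h2) isOpen_univ
    (g := fun p => γ p.1 - η p.2) (by fun_prop)
    (by rintro ⟨p, -, hp⟩; exact hne _ _ (sub_eq_zero.1 hp))
  rw [continuousOn_univ] at hL
  have hE : ∀ s t, Complex.exp (L (s, t)) = γ s - η t := fun s t => hLe (Set.mem_univ (s, t))
  have hs : ∀ x : ℝ, 0 < x → x < 2 * Real.pi → 0 < 2 * Real.sin (x / 2) := by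
    intro x h1 h2
    have := Real.sin_pos_of_pos_of_lt_pi (x := x / 2) (by linarith) (by linarith)
    linarith
  have flip : ∀ x : ℝ, Complex.exp ((x + Real.pi : ℝ) * Complex.I) = - Complex.exp (x * Complex.I) := by
    intro x; push_cast; rw [add_mul, Complex.exp_add, Complex.exp_pi_mul_I]; ring
  have flip' : ∀ x : ℝ, Complex.exp (-((x + Real.pi : ℝ) : ℂ) * Complex.I)
      = - Complex.exp (-(x : ℂ) * Complex.I) := by
    intro x; push_cast; rw [neg_add, add_mul, Complex.exp_add, neg_mul (Real.pi : ℂ), Complex.exp_neg,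
      Complex.exp_pi_mul_I]; norm_num
  -- corner values
  have k00 : γ 0 - η 0 = ((2 * Real.sin (δ / 2) : ℝ) : ℂ) *
      Complex.exp ((α - δ / 2 + Real.pi / 2 : ℝ) * Complex.I) := by
    rw [g0, e0, exp_sub_exp]; congr 4 <;> ring_nf
  have k10 : γ 1 - η 0 = ((2 * Real.sin ((β - (α - δ)) / 2) : ℝ) : ℂ) *
      Complex.exp (((β + α - δ) / 2 + Real.pi / 2 : ℝ) * Complex.I) := by
    rw [g1, e0, exp_sub_exp]; congr 4; ring_nf
  have k11 : γ 1 - η 1 = ((2 * Real.sin ((β - (α + δ)) / 2) : ℝ) : ℂ) *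
      Complex.exp (((β + α + δ) / 2 + Real.pi / 2 : ℝ) * Complex.I) := by
    rw [g1, e1, exp_sub_exp]; congr 4; ring_nf
  have k01 : η 1 - γ 0 = ((2 * Real.sin (δ / 2) : ℝ) : ℂ) *
      Complex.exp ((α + δ / 2 + Real.pi / 2 : ℝ) * Complex.I) := by
    rw [g0, e1, exp_sub_exp]; congr 4 <;> ring_nf
  have k01a : γ 0 - η 1 = ((2 * Real.sin (δ / 2) : ℝ) : ℂ) *
      Complex.exp ((α + δ / 2 - Real.pi / 2 : ℝ) * Complex.I) := by
    rw [← neg_sub, k01, ← mul_neg, ← neg_eq_iff_eq_neg.2 (flip (α + δ / 2 - Real.pi / 2))]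
    congr 5; ring
  have k01b : γ 0 - η 1 = ((2 * Real.sin (δ / 2) : ℝ) : ℂ) *
      Complex.exp ((α + δ / 2 + 3 * Real.pi / 2 : ℝ) * Complex.I) := by
    rw [← neg_sub, k01, ← mul_neg, ← flip]
    congr 3; ring_nf
  have p1 := hs δ hδ (by linarith)
  have p2 := hs (β - (α - δ)) (by linarith) (by linarith)
  have p3 := hs (β - (α + δ)) (by linarith) (by linarith)
  have S1 := side_lem (G := fun t => γ 0 - η t) (L := fun t => L (0, t)) (by fun_prop) (by fun_prop)
    (fun t => hE 0 t) α (fun t _ _ => by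
      have := hne 0 t; simp only [g0] at this ⊢; exact half_plane (hη1 t) _ this)
    (by rw [abs_lt]; constructor <;> linarith) (by rw [abs_lt]; constructor <;> linarith) p1 p1 k00 k01a
  have S2 := side_lem (G := fun t => γ 1 - η t) (L := fun t => L (1, t)) (by fun_prop) (by fun_prop)
    (fun t => hE 1 t) β (fun t _ _ => by
      have := hne 1 t; simp only [g1] at this ⊢; exact half_plane (hη1 t) _ this)
    (by rw [abs_lt]; constructor <;> linarith) (by rw [abs_lt]; constructor <;> linarith) p2 p3 k10 k11
  have S3 := side_lem (G := fun t => γ t - η 0) (L := fun t => L (t, 0)) (by fun_prop) (by fun_prop)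
    (fun t => hE t 0) (α - δ + Real.pi) (fun t _ _ => by
      have := (hne t 0).symm; simp only [e0] at this ⊢
      have := half_plane (hγ1 t) _ this
      rw [flip', mul_neg, ← neg_mul, neg_sub]; exact this)
    (by rw [abs_lt]; constructor <;> linarith) (by rw [abs_lt]; constructor <;> linarith) p1 p2 k00 k10
  have S4 := side_lem (G := fun t => γ t - η 1) (L := fun t => L (t, 1)) (by fun_prop) (by fun_prop)
    (fun t => hE t 1) (α + δ + Real.pi) (fun t _ _ => by
      have := (hne t 1).symm; simp only [e1] at this ⊢
      have := half_plane (hγ1 t) _ this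
      rw [flip', mul_neg, ← neg_mul, neg_sub]; exact this)
    (by rw [abs_lt]; constructor <;> linarith) (by rw [abs_lt]; constructor <;> linarith) p1 p3 k01b k11
  linarith


def cx (x : E2) : ℂ := ⟨x 0, x 1⟩

lemma sphPt_zero (t : ℝ) : sphPt t 0 = Real.cos t := by simp [sphPt]
lemma sphPt_one (t : ℝ) : sphPt t 1 = Real.sin t := by simp [sphPt]

lemma cx_norm (x : E2) : ‖cx x‖ = ‖x‖ := by
  rw [EuclideanSpace.norm_eq, Complex.norm_def, Complex.normSq_apply]
  simp [cx, Fin.sum_univ_two, sq]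

lemma cx_cont : Continuous cx := by
  have : cx = fun x : E2 => ((x 0 : ℝ) : ℂ) + ((x 1 : ℝ) : ℂ) * Complex.I := by
    ext x
    apply Complex.ext <;> simp [cx]
  rw [this]; fun_prop

lemma cx_inj {x y : E2} (h : cx x = cx y) : x = y := by
  ext i
  fin_cases i
  · exact congrArg Complex.re h
  · exact congrArg Complex.im h

lemma cx_sphPt (t : ℝ) : cx (sphPt t) = Complex.exp (t * Complex.I) := by
  rw [Complex.exp_mul_I]
  apply Complex.ext
  · simp [cx, sphPt_zero, ← Complex.ofReal_cos, ← Complex.ofReal_sin]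
  · simp [cx, sphPt_one, ← Complex.ofReal_cos, ← Complex.ofReal_sin]

lemma cx_smul (r : ℝ) (x : E2) : cx (r • x) = r * cx x := by
  apply Complex.ext <;> simp [cx]

lemma sphPt_norm (t : ℝ) : ‖sphPt t‖ = 1 := by
  rw [← cx_norm, cx_sphPt, Complex.norm_exp_ofReal_mul_I]

lemma polar (x : E2) : x = ‖x‖ • sphPt (Complex.arg (cx x)) := by
  apply cx_inj
  rw [cx_smul, cx_sphPt, ← cx_norm, Complex.norm_mul_exp_arg_mul_I]

lemma sphPt_contDiff : ContDiff ℝ (⊤ : ℕ∞) sphPt := by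
  unfold sphPt
  apply (EuclideanSpace.equiv (Fin 2) ℝ).symm.contDiff.comp
  rw [contDiff_pi]
  intro i
  fin_cases i
  · exact Real.contDiff_cos
  · exact Real.contDiff_sin

lemma sphPt_cont : Continuous sphPt := sphPt_contDiff.continuous

lemma sphPt_periodic (t : ℝ) (k : ℤ) : sphPt (t + k * (2 * Real.pi)) = sphPt t := by
  simp [sphPt]

lemma exists_sphPt {x : E2} (h : ‖x‖ = 1) : ∃ t, x = sphPt t := by
  refine ⟨Complex.arg (cx x), ?_⟩
  conv_lhs => rw [polar x, h, one_smul]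

lemma inner_grad (f : E2 → ℝ) (x v : E2) : ⟪gradient f x, v⟫ = fderiv ℝ f x v := by
  rw [← toDual_gradient]; simp

/-- interior direction -/
lemma radial_hasDeriv {f : E2 → ℝ} (hf : Differentiable ℝ f) (x : E2) (r : ℝ) :
    HasDerivAt (fun s : ℝ => f (s • x)) (fderiv ℝ f (r • x) x) r := by
  have h1 : HasDerivAt (fun s : ℝ => s • x) x r := by
    simpa using (hasDerivAt_id r).smul_const x
  exact (hf (r • x)).hasFDerivAt.comp_hasDerivAt r h1

lemma radial_lt {f : E2 → ℝ} (hf : Differentiable ℝ f) (x : E2) (h : fderiv ℝ f x x < 0) :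
    ∃ ρ : ℝ, ρ > 0 ∧ ρ < 1 ∧ ∀ s : ℝ, 0 < s → s ≤ ρ → f x < f ((1 - s) • x) := by
  have h1 := radial_hasDeriv hf x 1
  rw [one_smul] at h1
  have h2 := h1.tendsto_slope
  have h3 := (h2.eventually (gt_mem_nhds h))
  rw [eventually_nhdsWithin_iff, Metric.eventually_nhds_iff] at h3
  obtain ⟨ε, hε, H⟩ := h3
  refine ⟨min (ε / 2) (1/2), by positivity, by
    have := min_le_right (ε / 2) (1/2 : ℝ); linarith, fun s hs hs2 => ?_⟩
  have hs3 : s < ε := by have := min_le_left (ε / 2) (1/2 : ℝ); linarith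
  have := H (y := 1 - s) (by simp [abs_of_pos hs, hs3]) (by simp; linarith)
  rw [slope_def_field, one_smul, show (1 - s - 1) = -s by ring, div_neg, neg_lt_zero,
    div_pos_iff_of_pos_right hs] at this
  linarith

lemma strict_max {g : ℝ → ℝ} (hg : ContDiff ℝ (⊤ : ℕ∞) g) {θ : ℝ} (h0 : deriv g θ = 0)
    (h : deriv (deriv g) θ < 0) :
    ∃ δ > 0, ∀ s, s ≠ 0 → |s| ≤ δ → g (θ + s) < g θ := by
  have hd : Differentiable ℝ g := hg.differentiable (by simp)
  have hd2 : DifferentiableAt ℝ (deriv g) θ := by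
    by_contra hh; rw [deriv_zero_of_not_differentiableAt hh] at h; exact lt_irrefl _ h
  have h2 := hd2.hasDerivAt.tendsto_slope
  have h3 := (h2.eventually (gt_mem_nhds h))
  rw [eventually_nhdsWithin_iff, Metric.eventually_nhds_iff] at h3
  obtain ⟨ε, hε, H⟩ := h3
  have H' : ∀ y, |y - θ| < ε → y ≠ θ → deriv g y / (y - θ) < 0 := by
    intro y hy hy2
    have := H (y := y) (by simpa [Real.dist_eq] using hy) hy2
    rwa [slope_def_field, h0, sub_zero] at this
  refine ⟨ε / 2, by positivity, fun s hs hs2 => ?_⟩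
  rcases lt_or_gt_of_ne hs with hneg | hpos
  · have : StrictMonoOn g (Set.Icc (θ + s) θ) := by
      apply strictMonoOn_of_deriv_pos (convex_Icc _ _) hd.continuous.continuousOn
      intro y hy
      rw [interior_Icc] at hy
      rw [abs_of_neg hneg] at hs2
      have := H' y (by rw [abs_lt]; constructor <;> linarith [hy.1, hy.2]) hy.2.ne
      rcases div_neg_iff.1 this with h | h
      · exact h.1
      · linarith [h.2, hy.2]
    exact this (Set.left_mem_Icc.2 (by linarith)) (Set.right_mem_Icc.2 (by linarith)) (by linarith)
  · have : StrictAntiOn g (Set.Icc θ (θ + s)) := by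
      apply strictAntiOn_of_deriv_neg (convex_Icc _ _) hd.continuous.continuousOn
      intro y hy
      rw [interior_Icc] at hy
      rw [abs_of_pos hpos] at hs2
      have := H' y (by rw [abs_lt]; constructor <;> linarith [hy.1, hy.2]) hy.1.ne'
      rcases div_neg_iff.1 this with h | h
      · linarith [h.2, hy.1]
      · exact h.1
    exact this (Set.left_mem_Icc.2 (by linarith)) (Set.right_mem_Icc.2 (by linarith)) (by linarith)

lemma forest {ι X : Type*} [DecidableEq X] [DecidableEq ι] (r : ℝ → X → X → Prop)
    (hsymm : ∀ t x y, r t x y → r t y x) (htrans : ∀ t x y z, r t x y → r t y z → r t x z)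
    (a b : ι → X) (τ : ι → ℝ) :
    ∀ (N : ℕ) (P : Finset ι) (M : Finset X), P.card = N → Set.InjOn τ P →
      (∀ p ∈ P, a p ∈ M ∧ b p ∈ M ∧ ¬ r (τ p) (a p) (b p) ∧ r (τ p) (a p) (a p) ∧
        ∀ t, τ p < t → r t (a p) (b p)) → M.Nonempty → P.card + 1 ≤ M.card := by
  classical
  intro N
  induction N using Nat.strong_induction_on with
  | _ N ih =>
  intro P M hN hinj H hM
  rcases P.eq_empty_or_nonempty with rfl | hP
  · simpa using hM.card_pos
  obtain ⟨p, hp, hmax⟩ := P.exists_max_image τ hP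
  set M1 := M.filter (fun m => r (τ p) (a p) m) with hM1
  set M2 := M.filter (fun m => ¬ r (τ p) (a p) m) with hM2
  set P1 := (P.erase p).filter (fun q => r (τ p) (a p) (a q)) with hP1
  set P2 := (P.erase p).filter (fun q => ¬ r (τ p) (a p) (a q)) with hP2
  have hcM : M1.card + M2.card = M.card := Finset.card_filter_add_card_filter_not _
  have hcP : P1.card + P2.card = (P.erase p).card := Finset.card_filter_add_card_filter_not _
  have hce : (P.erase p).card + 1 = P.card := Finset.card_erase_add_one hp
  have hq : ∀ q ∈ P.erase p, r (τ p) (a q) (b q) := by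
    intro q hq
    have hqP := Finset.mem_of_mem_erase hq
    refine (H q hqP).2.2.2.2 _ (lt_of_le_of_ne (hmax q hqP) fun h => ?_)
    exact Finset.ne_of_mem_erase hq (hinj hqP hp h)
  have i1 : P1.card + 1 ≤ M1.card := by
    refine ih P1.card (by omega) P1 M1 rfl (hinj.mono ?_) ?_ ⟨a p, ?_⟩
    · intro q h; simp only [hP1, Finset.coe_filter, Set.mem_ofPred_eq] at h
      exact Finset.mem_of_mem_erase h.1
    · intro q h
      rw [hP1, Finset.mem_filter] at h
      have hh := H q (Finset.mem_of_mem_erase h.1)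
      refine ⟨?_, ?_, hh.2.2⟩
      · exact Finset.mem_filter.2 ⟨hh.1, h.2⟩
      · exact Finset.mem_filter.2 ⟨hh.2.1, htrans _ _ _ _ h.2 (hq q h.1)⟩
    · exact Finset.mem_filter.2 ⟨(H p hp).1, (H p hp).2.2.2.1⟩
  have i2 : P2.card + 1 ≤ M2.card := by
    refine ih P2.card (by omega) P2 M2 rfl (hinj.mono ?_) ?_ ⟨b p, ?_⟩
    · intro q h; simp only [hP2, Finset.coe_filter, Set.mem_ofPred_eq] at h
      exact Finset.mem_of_mem_erase h.1
    · intro q h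
      rw [hP2, Finset.mem_filter] at h
      have hh := H q (Finset.mem_of_mem_erase h.1)
      refine ⟨?_, ?_, hh.2.2⟩
      · exact Finset.mem_filter.2 ⟨hh.1, h.2⟩
      · exact Finset.mem_filter.2 ⟨hh.2.1, fun h' => h.2 (htrans _ _ _ _ h' (hsymm _ _ _ (hq q h.1)))⟩
    · exact Finset.mem_filter.2 ⟨(H p hp).2.1, (H p hp).2.2.1⟩
  omega

def DD : Set E2 := Metric.closedBall 0 1
def SS (f : E2 → ℝ) (t : ℝ) : Set E2 := {x | x ∈ DD ∧ f x < t}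

lemma joined_near {f : E2 → ℝ} (hf : Continuous f) {t : ℝ} {x : E2} (hx : x ∈ SS f t) :
    ∃ ε > 0, ∀ y ∈ DD, dist y x < ε → JoinedIn (SS f t) x y := by
  obtain ⟨ε, hε, H⟩ := Metric.isOpen_iff.1 (isOpen_lt hf continuous_const : IsOpen {y | f y < t}) x hx.2
  refine ⟨ε, hε, fun y hy hyx => JoinedIn.of_segment_subset ?_⟩
  intro z hz
  refine ⟨(convex_closedBall (0 : E2) 1).segment_subset hx.1 hy hz, H ?_⟩
  exact (convex_ball x ε).segment_subset (Metric.mem_ball_self hε) hyx hz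

lemma exists_min {f : E2 → ℝ} (hf : Continuous f) {t : ℝ} {x : E2} (hx : x ∈ SS f t) :
    ∃ m, JoinedIn (SS f t) x m ∧ IsLocalMinOn f DD m := by
  set C := {y | JoinedIn (SS f t) x y} with hC
  have hCD : C ⊆ DD := fun y hy => hy.target_mem.1
  have hcl : closure C ⊆ DD := closure_minimal hCD Metric.isClosed_closedBall
  have hcomp : IsCompact (closure C) :=
    (isCompact_closedBall (0 : E2) 1).of_isClosed_subset isClosed_closure hcl
  have hxC : x ∈ C := JoinedIn.refl hx
  obtain ⟨m, hm, hmin⟩ := hcomp.exists_isMinOn ⟨x, subset_closure hxC⟩ hf.continuousOn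
  have hmt : m ∈ SS f t := ⟨hcl hm, lt_of_le_of_lt (hmin (subset_closure hxC)) hx.2⟩
  obtain ⟨ε, hε, H⟩ := joined_near hf hmt
  obtain ⟨y, hy, hym⟩ := Metric.mem_closure_iff.1 hm ε hε
  have hmC : JoinedIn (SS f t) x m := hy.trans (H y (hCD hy) (by rwa [dist_comm])).symm
  refine ⟨m, hmC, ?_⟩
  have : Metric.ball m ε ∈ nhds m := Metric.ball_mem_nhds m hε
  filter_upwards [mem_nhdsWithin_of_mem_nhds this, self_mem_nhdsWithin] with z hz hzD
  exact hmin (subset_closure (hmC.trans (H z hzD hz)))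

lemma SS_mono (f : E2 → ℝ) {s t : ℝ} (h : s ≤ t) : SS f s ⊆ SS f t := fun _ hx => ⟨hx.1, hx.2.trans_le h⟩

lemma sphPt_mem (t : ℝ) : sphPt t ∈ DD := by simp [DD, sphPt_norm]

lemma interior_crit {f : E2 → ℝ} {m : E2} (hmD : m ∈ DD) (h : IsLocalMinOn f DD m)
    (hm : ‖m‖ ≠ 1) : IsLocalMin f m ∧ m ∈ Metric.ball (0 : E2) 1 := by
  have hb : m ∈ Metric.ball (0 : E2) 1 := by
    have : ‖m‖ ≤ 1 := by simpa [DD] using hmD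
    simpa using lt_of_le_of_ne this hm
  refine ⟨?_, hb⟩
  apply h.isLocalMin
  exact Filter.mem_of_superset (Metric.isOpen_ball.mem_nhds hb) Metric.ball_subset_closedBall


namespace Ribbon
variable {n : ℕ} (a : Ribbon n)

lemma g_diff : Differentiable ℝ a.g := a.smooth_g.differentiable (by simp)

lemma g_shift (t : ℝ) (k : ℤ) : a.g (t + k * (2 * Real.pi)) = a.g t := a.periodic_g.int_mul k t

lemma dg_shift (t : ℝ) (k : ℤ) : deriv a.g (t + k * (2 * Real.pi)) = deriv a.g t := by
  have : a.g = fun t => a.g (t + k * (2 * Real.pi)) := by ext t; rw [g_shift]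
  conv_rhs => rw [this]
  rw [deriv_comp_add_const]

lemma crit_all {t : ℝ} (h : deriv a.g t = 0) : ∃ i, ∃ k : ℤ, t = a.θ i + k * (2 * Real.pi) := by
  have hp : (0 : ℝ) < 2 * Real.pi := by positivity
  have h1 := toIcoMod_mem_Ico' hp t
  have h2 := toIcoMod_add_toIcoDiv_zsmul hp 0 t
  rw [zsmul_eq_mul] at h2
  rw [← h2, dg_shift] at h
  obtain ⟨i, hi⟩ := a.crit_only _ h1 h
  exact ⟨i, toIcoDiv hp 0 t, by rw [← hi, h2]⟩

def maxneg : Finset (Fin n) := Finset.univ.filter fun i => deriv (deriv a.g) (a.θ i) < 0 ∧ a.ν i = -1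
def minpos : Finset (Fin n) := Finset.univ.filter fun i => 0 < deriv (deriv a.g) (a.θ i) ∧ a.ν i = 1

variable {a}

lemma boundary_min {f : E2 → ℝ} (hf : IsExtension a f) {m : E2} (hm : ‖m‖ = 1)
    (h : IsLocalMinOn f DD m) : ∃ i ∈ a.minpos, m = sphPt (a.θ i) := by
  obtain ⟨hs, hg, -, hν⟩ := hf
  have hfd : Differentiable ℝ f := hs.differentiable (by simp)
  obtain ⟨t, rfl⟩ := exists_sphPt hm
  have h1 : IsLocalMin a.g t := by
    have : Filter.Tendsto sphPt (nhds t) (nhdsWithin (sphPt t) DD) :=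
      tendsto_nhdsWithin_iff.2 ⟨sphPt_cont.continuousAt, Filter.Eventually.of_forall sphPt_mem⟩
    have h2 := this.eventually h
    filter_upwards [h2] with s hs
    rwa [hg, hg] at hs
  obtain ⟨i, k, hik⟩ := a.crit_all h1.deriv_eq_zero
  have hpt : sphPt t = sphPt (a.θ i) := by rw [hik, sphPt_periodic]
  have h1' : IsLocalMin a.g (a.θ i) := by
    have hc : Filter.Tendsto (fun s => s + k * (2 * Real.pi)) (nhds (a.θ i)) (nhds t) := by
      rw [hik]; exact (continuous_id.add continuous_const).continuousAt
    filter_upwards [hc.eventually h1] with s hs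
    rwa [hik, g_shift, g_shift] at hs
  have h2 : 0 < deriv (deriv a.g) (a.θ i) := by
    rcases lt_or_gt_of_ne (a.node_nondeg i) with h2 | h2
    · exfalso
      obtain ⟨δ, hδ, H⟩ := strict_max a.smooth_g (a.node_crit i) h2
      obtain ⟨ε, hε, H2⟩ := Metric.eventually_nhds_iff.1 h1'
      have := H (min δ (ε / 2)) (by positivity) (by rw [abs_of_pos (by positivity)]; exact min_le_left _ _)
      have h3 := H2 (y := a.θ i + min δ (ε / 2)) (by
        rw [Real.dist_eq, add_sub_cancel_left, abs_of_pos (by positivity)]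
        have := min_le_right δ (ε / 2); linarith)
      linarith
    · exact h2
  refine ⟨i, ?_, hpt⟩
  simp only [minpos, Finset.mem_filter, Finset.mem_univ, true_and]
  refine ⟨h2, (a.nu_sign i).resolve_right fun hneg => ?_⟩
  have h3 := (hν i).2 h2
  rw [hneg, inner_grad] at h3
  rw [hpt] at h
  push_cast at h3
  obtain ⟨ρ, hρ, hρ1, H⟩ := radial_lt (f := fun x => - f x) hfd.neg (sphPt (a.θ i)) (by
    rw [show (fun x => - f x) = -f from rfl, fderiv_neg]; simp; linarith)
  obtain ⟨ε, hε, H2⟩ := Metric.mem_nhdsWithin_iff.1 h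
  set s := min ρ (ε / 2) with hs'
  have hspos : 0 < s := by positivity
  have hs1 : s ≤ ρ := min_le_left _ _
  have hs2 : s < ε := by have := min_le_right ρ (ε / 2); linarith
  have h5 := H s hspos hs1
  have h6 := H2 (a := (1 - s) • sphPt (a.θ i)) ⟨by
    rw [Metric.mem_ball, dist_eq_norm, sub_smul, one_smul, sub_sub_cancel_left, norm_neg, norm_smul,
      sphPt_norm, mul_one, Real.norm_eq_abs, abs_of_pos hspos]; exact hs2, by
    simp [DD, norm_smul, sphPt_norm, abs_le]; constructor <;> linarith⟩
  simp only [Set.mem_ofPred_eq] at h6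
  linarith

lemma lower_core {f : E2 → ℝ} (hf : IsExtension a f) (hfin : (critPts f).Finite) :
    a.maxneg.card + 1 ≤ a.minpos.card + (critPts f).ncard := by
  classical
  have hext := hf
  obtain ⟨hs, hg, hcirc, hν⟩ := hf
  have hfd : Differentiable ℝ f := hs.differentiable (by simp)
  have hfc : Continuous f := hfd.continuous
  -- local data at nodes
  have hδ : ∀ i : Fin n, ∃ δ > 0, i ∈ a.maxneg →
      ∀ s, s ≠ 0 → |s| ≤ δ → a.g (a.θ i + s) < a.g (a.θ i) := by
    intro i
    by_cases hi : i ∈ a.maxneg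
    · obtain ⟨δ, h, H⟩ := strict_max a.smooth_g (a.node_crit i) (Finset.mem_filter.1 hi).2.1
      exact ⟨δ, h, fun _ => H⟩
    · exact ⟨1, one_pos, fun h => absurd h hi⟩
  choose δ hδpos hδ using hδ
  have hρ : ∀ i : Fin n, ∃ ρ : ℝ, ρ > 0 ∧ ρ < 1 ∧ (i ∈ a.maxneg →
      ∀ s : ℝ, 0 < s → s ≤ ρ → a.g (a.θ i) < f ((1 - s) • sphPt (a.θ i))) := by
    intro i
    by_cases hi : i ∈ a.maxneg
    · have hi' := (Finset.mem_filter.1 hi).2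
      have h3 := (hν i).1 hi'.1
      rw [hi'.2, inner_grad] at h3
      push_cast at h3
      obtain ⟨ρ, h1, h2, h3⟩ := radial_lt hfd (sphPt (a.θ i)) (by linarith)
      exact ⟨ρ, h1, h2, fun _ s hs hs2 => by rw [← hg]; exact h3 s hs hs2⟩
    · exact ⟨1/2, by norm_num, by norm_num, fun h => absurd h hi⟩
  choose ρ hρpos hρ1 hρ using hρ
  set τ : Fin n → ℝ := fun i => a.g (a.θ i) with hτ
  have hτinj : Function.Injective τ := fun i j h => a.values_distinct i j h
  set Lp : Fin n → E2 := fun i => sphPt (a.θ i - δ i) with hLp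
  set Rp : Fin n → E2 := fun i => sphPt (a.θ i + δ i) with hRp
  set Ip : Fin n → E2 := fun i => (1 - ρ i) • sphPt (a.θ i) with hIp
  have hL : ∀ i ∈ a.maxneg, Lp i ∈ SS f (τ i) := fun i hi => ⟨sphPt_mem _, by
    rw [hLp]; simp only; rw [hg, sub_eq_add_neg]
    exact hδ i hi _ (by linarith [hδpos i]) (by rw [abs_neg, abs_of_pos (hδpos i)])⟩
  have hR : ∀ i ∈ a.maxneg, Rp i ∈ SS f (τ i) := fun i hi => ⟨sphPt_mem _, by
    rw [hRp]; simp only; rw [hg]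
    exact hδ i hi _ (by linarith [hδpos i]) (by rw [abs_of_pos (hδpos i)])⟩
  have hLR : ∀ i ∈ a.maxneg, ∀ t, τ i < t → JoinedIn (SS f t) (Lp i) (Rp i) := by
    intro i hi t ht
    have hpc : IsPathConnected (sphPt '' (Set.Icc (a.θ i - δ i) (a.θ i + δ i))) := by
      refine ((convex_Icc _ _).isPathConnected ⟨a.θ i, ?_⟩).image sphPt_cont
      constructor <;> linarith [hδpos i]
    refine (hpc.joinedIn _ ⟨_, ?_, rfl⟩ _ ⟨_, ?_, rfl⟩).mono ?_
    · constructor <;> linarith [hδpos i]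
    · constructor <;> linarith [hδpos i]
    · rintro _ ⟨s, hs, rfl⟩
      refine ⟨sphPt_mem _, lt_of_le_of_lt ?_ ht⟩
      rw [hg]
      rcases eq_or_ne s (a.θ i) with rfl | hne
      · exact le_rfl
      · have := hδ i hi (s - a.θ i) (sub_ne_zero.2 hne) (by rw [abs_le]; constructor <;> linarith [hs.1, hs.2])
        rw [add_sub_cancel] at this; exact this.le
  -- segments from the node inward
  have hseg : ∀ i ∈ a.maxneg, ∀ y ∈ segment ℝ (sphPt (a.θ i)) (Ip i), y ∈ DD ∧
      (y = sphPt (a.θ i) ∨ τ i < f y) := by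
    intro i hi y hy
    rw [segment_eq_image] at hy
    obtain ⟨u, hu, rfl⟩ := hy
    have e : (1 - u) • sphPt (a.θ i) + u • Ip i = (1 - u * ρ i) • sphPt (a.θ i) := by
      rw [hIp]; simp only; module
    simp only [e]
    have hu1 : u * ρ i ≤ ρ i := by nlinarith [hu.2, hρpos i]
    have hu0 : 0 ≤ u * ρ i := mul_nonneg hu.1 (hρpos i).le
    refine ⟨?_, ?_⟩
    · simp [DD, norm_smul, sphPt_norm, abs_le]; constructor <;> linarith [hρ1 i]
    · rcases hu0.eq_or_lt with h | h
      · left; rw [← h]; simp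
      · right; exact hρ i hi _ h hu1
  set nf : E2 → ℝ := fun x => - f x with hnf
  have hnfc : Continuous nf := hfc.neg
  have hI : ∀ i ∈ a.maxneg, Ip i ∈ SS nf (- τ i) := by
    intro i hi
    have := hseg i hi (Ip i) (right_mem_segment _ _ _)
    refine ⟨this.1, ?_⟩
    have h2 := hρ i hi (ρ i) (hρpos i) le_rfl
    simp only [hnf, neg_lt_neg_iff]; exact h2
  set loop : Finset (Fin n) := a.maxneg.filter fun i => JoinedIn (SS f (τ i)) (Lp i) (Rp i) with hloop
  set merge : Finset (Fin n) := a.maxneg.filter fun i => ¬ JoinedIn (SS f (τ i)) (Lp i) (Rp i) with hmerge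
  have hcard : loop.card + merge.card = a.maxneg.card := Finset.card_filter_add_card_filter_not _
  -- loops
  have hloopU : ∀ i ∈ loop, ∀ q, JoinedIn (SS nf (- τ i)) (Ip i) q → ‖q‖ ≠ 1 := by
    intro i hi q hq hq1
    rw [hloop, Finset.mem_filter] at hi
    obtain ⟨hi, hj⟩ := hi
    have hqf : τ i < f q := by have := hq.target_mem.2; simp only [hnf] at this; linarith
    -- path from node to q
    set T : Set E2 := {y | y ∈ DD ∧ (y = sphPt (a.θ i) ∨ τ i < f y)} with hT
    have j1 : JoinedIn T (sphPt (a.θ i)) (Ip i) := JoinedIn.of_segment_subset (hseg i hi)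
    have j2 : JoinedIn T (Ip i) q := hq.mono fun y hy => ⟨hy.1, Or.inr (by
      have := hy.2; simp only [hnf] at this; linarith)⟩
    obtain ⟨γ, hγ⟩ := j1.trans j2
    obtain ⟨η, hη⟩ := hj
    obtain ⟨b0, hb0⟩ := exists_sphPt hq1
    -- normalise angle
    have hp : (0 : ℝ) < 2 * Real.pi := by positivity
    obtain ⟨β, hβ, hqβ⟩ : ∃ β ∈ Set.Ico (a.θ i - δ i) (a.θ i - δ i + 2 * Real.pi), q = sphPt β := by
      refine ⟨toIcoMod hp (a.θ i - δ i) b0, toIcoMod_mem_Ico _ _ _, ?_⟩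
      have h2 := toIcoMod_add_toIcoDiv_zsmul hp (a.θ i - δ i) b0
      rw [zsmul_eq_mul] at h2
      rw [hb0, ← h2, sphPt_periodic, h2]
    have hβ2 : a.θ i + δ i < β := by
      by_contra hcon
      rw [not_lt] at hcon
      rw [hqβ, hg] at hqf
      rcases eq_or_ne β (a.θ i) with h | hne
      · rw [h] at hqf; exact lt_irrefl _ hqf
      · have := hδ i hi (β - a.θ i) (sub_ne_zero.2 hne) (by rw [abs_le]; constructor <;> linarith [hβ.1])
        rw [add_sub_cancel] at this
        exact lt_asymm this hqf
    have hγ' : ∀ t, γ.extend t ∈ T := fun t => by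
      have : γ.extend t ∈ Set.range γ := by rw [← γ.extend_range]; exact ⟨t, rfl⟩
      obtain ⟨u, hu⟩ := this; rw [← hu]; exact hγ u
    have hη' : ∀ t, η.extend t ∈ SS f (τ i) := fun t => by
      have : η.extend t ∈ Set.range η := by rw [← η.extend_range]; exact ⟨t, rfl⟩
      obtain ⟨u, hu⟩ := this; rw [← hu]; exact hη u
    refine crossing (γ := fun t => cx (γ.extend t)) (η := fun t => cx (η.extend t))
      (cx_cont.comp γ.continuous_extend) (cx_cont.comp η.continuous_extend) ?_ ?_ ?_ (hδpos i) hβ2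
      hβ.2 ?_ ?_ ?_ ?_
    · intro t; rw [cx_norm]; simpa [DD] using (hγ' t).1
    · intro t; rw [cx_norm]; simpa [DD] using (hη' t).1
    · intro s t hst
      have h1 := hγ' s
      have h2 := (hη' t).2
      rw [cx_inj hst] at h1
      rcases h1.2 with h3 | h3
      · rw [h3, hg] at h2; exact lt_irrefl _ h2
      · exact lt_asymm h2 h3
    · simp [cx_sphPt]
    · simp [hqβ, cx_sphPt]
    · simp only [Path.extend_zero]; rw [hLp, cx_sphPt]
    · simp only [Path.extend_one]; rw [hRp, cx_sphPt]
  have hx : ∀ i : Fin n, ∃ x, i ∈ loop → JoinedIn (SS nf (- τ i)) (Ip i) x ∧ IsLocalMinOn nf DD x := by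
    intro i
    by_cases hi : i ∈ loop
    · obtain ⟨x, h⟩ := exists_min hnfc (hI i (Finset.mem_filter.1 hi).1)
      exact ⟨x, fun _ => h⟩
    · exact ⟨0, fun h => absurd h hi⟩
  choose X hX using hx
  set Kmax : Set E2 := {x | x ∈ critPts f ∧ IsLocalMin nf x} with hKmax
  set Kmin : Set E2 := {x | x ∈ critPts f ∧ IsLocalMin f x} with hKmin
  have hKmaxf : Kmax.Finite := hfin.subset fun x hx => hx.1
  have hKminf : Kmin.Finite := hfin.subset fun x hx => hx.1
  have hXK : ∀ i ∈ loop, X i ∈ Kmax := by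
    intro i hi
    obtain ⟨h1, h2⟩ := hX i hi
    obtain ⟨h3, h4⟩ := interior_crit h1.target_mem.1 h2 (hloopU i hi _ h1)
    refine ⟨⟨h4, ?_⟩, h3⟩
    have := h3.fderiv_eq_zero
    rw [show nf = -f from rfl, fderiv_neg, neg_eq_zero] at this
    exact this
  have hXinj : ∀ i ∈ loop, ∀ j ∈ loop, τ i < τ j → X i ≠ X j := by
    intro i hi j hj hij hXX
    have h1 := (hX i hi).1
    have h2 := (hX j hj).1.mono (SS_mono nf (neg_le_neg hij.le))
    have hj' := (Finset.mem_filter.1 hj).1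
    have h3 : JoinedIn (SS nf (- τ i)) (sphPt (a.θ j)) (Ip j) := by
      refine JoinedIn.of_segment_subset fun y hy => ?_
      obtain ⟨h4, h5⟩ := hseg j hj' y hy
      refine ⟨h4, ?_⟩
      simp only [hnf, neg_lt_neg_iff]
      rcases h5 with h5 | h5
      · rw [h5, hg]; exact hij
      · exact hij.trans h5
    rw [hXX] at h1
    exact hloopU i hi _ ((h1.trans h2.symm).trans h3.symm) (sphPt_norm _)
  have hloopcard : loop.card ≤ Kmax.ncard := by
    have h1 : Set.InjOn X loop := by
      intro i hi j hj h
      by_contra hne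
      rcases lt_or_gt_of_ne (fun h => hne (hτinj h) : τ i ≠ τ j) with h' | h'
      · exact hXinj i hi j hj h' h
      · exact hXinj j hj i hi h' h.symm
    have h2 : (X '' loop) ⊆ Kmax := by rintro _ ⟨i, hi, rfl⟩; exact hXK i hi
    have := Set.ncard_le_ncard h2 hKmaxf
    rwa [h1.ncard_image, Set.ncard_coe_finset] at this
  -- minima
  set MM : Set E2 := {m | m ∈ DD ∧ IsLocalMinOn f DD m} with hMM
  have hMMsub : MM ⊆ Kmin ∪ (fun i => sphPt (a.θ i)) '' (a.minpos : Set (Fin n)) := by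
    rintro m ⟨h1, h2⟩
    by_cases hm : ‖m‖ = 1
    · right
      obtain ⟨i, hi, h⟩ := boundary_min hext hm h2
      exact ⟨i, hi, h.symm⟩
    · left
      obtain ⟨h3, h4⟩ := interior_crit h1 h2 hm
      exact ⟨⟨h4, h3.fderiv_eq_zero⟩, h3⟩
  have hfin2 : (Kmin ∪ (fun i => sphPt (a.θ i)) '' (a.minpos : Set (Fin n))).Finite :=
    hKminf.union (Set.toFinite _)
  have hMMf : MM.Finite := hfin2.subset hMMsub
  have hMMcard : MM.ncard ≤ Kmin.ncard + a.minpos.card := by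
    refine (Set.ncard_le_ncard hMMsub hfin2).trans ((Set.ncard_union_le _ _).trans ?_)
    gcongr
    refine (Set.ncard_image_le (Set.toFinite _)).trans ?_
    rw [Set.ncard_coe_finset]
  have hab : ∀ i : Fin n, ∃ m m' : E2, i ∈ merge →
      (JoinedIn (SS f (τ i)) (Lp i) m ∧ IsLocalMinOn f DD m) ∧
      (JoinedIn (SS f (τ i)) (Rp i) m' ∧ IsLocalMinOn f DD m') := by
    intro i
    by_cases hi : i ∈ merge
    · obtain ⟨x, h⟩ := exists_min hfc (hL i (Finset.mem_filter.1 hi).1)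
      obtain ⟨y, h'⟩ := exists_min hfc (hR i (Finset.mem_filter.1 hi).1)
      exact ⟨x, y, fun _ => ⟨h, h'⟩⟩
    · exact ⟨0, 0, fun h => absurd h hi⟩
  choose A B hAB using hab
  have hforest := forest (fun t x y => JoinedIn (SS f t) x y) (fun t x y h => h.symm)
    (fun t x y z h h' => h.trans h') A B τ merge.card merge hMMf.toFinset rfl hτinj.injOn (by
      intro i hi
      obtain ⟨⟨h1, h2⟩, h3, h4⟩ := hAB i hi
      rw [hmerge, Finset.mem_filter] at hi
      refine ⟨?_, ?_, ?_, ?_, ?_⟩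
      · rw [Set.Finite.mem_toFinset]; exact ⟨h1.target_mem.1, h2⟩
      · rw [Set.Finite.mem_toFinset]; exact ⟨h3.target_mem.1, h4⟩
      · intro h; exact hi.2 ((h1.trans h).trans h3.symm)
      · exact h1.symm.trans h1
      · intro t ht
        exact ((h1.symm.mono (SS_mono f ht.le)).trans (hLR i hi.1 t ht)).trans
          (h3.mono (SS_mono f ht.le))) (by
      obtain ⟨m, hm, -⟩ := exists_min (f := f) hfc (t := f 0 + 1) (x := 0)
        ⟨by simp [DD], by linarith⟩
      obtain ⟨m, hm, h⟩ := exists_min (f := f) hfc (t := f 0 + 1) (x := 0)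
        ⟨by simp [DD], by linarith⟩
      exact ⟨m, by rw [Set.Finite.mem_toFinset]; exact ⟨hm.target_mem.1, h⟩⟩)
  rw [← Set.ncard_eq_toFinset_card MM hMMf] at hforest
  -- disjointness
  have hdisj : Disjoint Kmin Kmax := by
    rw [Set.disjoint_left]
    rintro x ⟨⟨hx1, hx2⟩, hx3⟩ ⟨-, hx4⟩
    have hconst : ∀ᶠ y in nhds x, f y = f x := by
      filter_upwards [hx3, hx4] with y h1 h2
      simp only [hnf] at h2; linarith
    have hev : ∀ᶠ y in nhds x, y ∈ critPts f := by
      filter_upwards [hconst.eventually_nhds, Metric.isOpen_ball.mem_nhds hx1] with y hy hy2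
      refine ⟨hy2, ?_⟩
      have : f =ᶠ[nhds y] fun _ => f x := hy
      rw [this.fderiv_eq]; simp
    exact (infinite_of_mem_nhds x hev) hfin
  have hsum : Kmin.ncard + Kmax.ncard ≤ (critPts f).ncard := by
    rw [← Set.ncard_union_eq hdisj hKminf hKmaxf]
    exact Set.ncard_le_ncard (Set.union_subset (fun x hx => hx.1) (fun x hx => hx.1)) hfin
  omega

end Ribbon


lemma alt_lem {g : ℝ → ℝ} (hg : ContDiff ℝ (⊤ : ℕ∞) g) {s t : ℝ} (hst : s < t)
    (hs : deriv g s = 0) (ht : deriv g t = 0) (ht2 : deriv (deriv g) t ≠ 0)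
    (h : ∀ x ∈ Set.Ioo s t, deriv g x ≠ 0) (hs2 : deriv (deriv g) s < 0) :
    0 < deriv (deriv g) t ∧ g t < g s := by
  have hd : Differentiable ℝ g := hg.differentiable (by simp)
  have hc : Continuous (deriv g) := hg.continuous_deriv (by simp)
  obtain ⟨δ, hδ, H⟩ := strict_max hg hs hs2
  -- some point of negative slope
  have hneg : ∃ x ∈ Set.Ioo s t, deriv g x < 0 := by
    set η := min δ ((t - s) / 2) with hη
    have h0 : 0 < η := lt_min hδ (by linarith)
    have h1 : η ≤ δ := min_le_left _ _
    have h2 : η ≤ (t - s) / 2 := min_le_right _ _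
    have h3 := H η h0.ne' (by rw [abs_of_pos h0]; exact h1)
    obtain ⟨c, hc1, hc2⟩ := exists_deriv_eq_slope g (show s < s + η by linarith) hd.continuous.continuousOn
      hd.differentiableOn
    refine ⟨c, ⟨hc1.1, by linarith [hc1.2]⟩, ?_⟩
    rw [hc2]
    exact div_neg_of_neg_of_pos (by linarith) (by linarith)
  obtain ⟨x0, hx0, hx0n⟩ := hneg
  have hall : ∀ x ∈ Set.Ioo s t, deriv g x < 0 := by
    intro x hx
    by_contra hcon
    rw [not_lt] at hcon
    have hpre : IsPreconnected (Set.Ioo s t) := isPreconnected_Ioo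
    obtain ⟨y, hy, hy2⟩ := hpre.intermediate_value hx0 hx hc.continuousOn ⟨hx0n.le, hcon⟩
    exact h y hy hy2
  have hanti : StrictAntiOn g (Set.Icc s t) := by
    refine strictAntiOn_of_deriv_neg (convex_Icc _ _) hd.continuous.continuousOn ?_
    rw [interior_Icc]; exact hall
  refine ⟨?_, hanti (Set.left_mem_Icc.2 hst.le) (Set.right_mem_Icc.2 hst.le) hst⟩
  rcases lt_or_gt_of_ne ht2 with h2 | h2
  · exfalso
    obtain ⟨δ, hδ, H⟩ := strict_max hg ht h2
    set η := min δ (t - s) with hη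
    have h0 : 0 < η := lt_min hδ (by linarith)
    have h1 : η ≤ δ := min_le_left _ _
    have h2 : η ≤ (t - s) := min_le_right _ _
    have h3 := H (-η) (by linarith) (by rw [abs_neg, abs_of_pos h0]; exact h1)
    have h4 := hanti (a := t + -η) (b := t) ⟨by linarith, by linarith⟩ ⟨by linarith, by linarith⟩ (by linarith)
    linarith
  · exact h2

lemma alt_lem' {g : ℝ → ℝ} (hg : ContDiff ℝ (⊤ : ℕ∞) g) {s t : ℝ} (hst : s < t)
    (hs : deriv g s = 0) (ht : deriv g t = 0) (ht2 : deriv (deriv g) t ≠ 0)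
    (h : ∀ x ∈ Set.Ioo s t, deriv g x ≠ 0) (hs2 : 0 < deriv (deriv g) s) :
    deriv (deriv g) t < 0 ∧ g s < g t := by
  have e : deriv (fun x => - g x) = fun x => - deriv g x := by ext x; simp
  have e2 : deriv (deriv (fun x => - g x)) = fun x => - deriv (deriv g) x := by rw [e]; ext x; simp
  have := alt_lem (g := fun x => - g x) hg.neg hst (by rw [e]; simpa using hs) (by rw [e]; simpa using ht)
    (by rw [e2]; simpa using ht2) (by rw [e]; simpa using h) (by rw [e2]; simpa using hs2)
  rw [e2] at this
  constructor <;> linarith [this.1, this.2]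

namespace Ribbon
variable {n : ℕ} (a : Ribbon n)

lemma ddg_shift (t : ℝ) (k : ℤ) :
    deriv (deriv a.g) (t + k * (2 * Real.pi)) = deriv (deriv a.g) t := by
  have : deriv a.g = fun t => deriv a.g (t + k * (2 * Real.pi)) := by ext t; rw [dg_shift]
  conv_rhs => rw [this]
  rw [deriv_comp_add_const]

lemma succ_exists : ∃ e : Equiv.Perm (Fin n), (∀ i, ∃ k : ℤ, a.θ i < a.θ (e i) + k * (2 * Real.pi) ∧
    ∀ x ∈ Set.Ioo (a.θ i) (a.θ (e i) + k * (2 * Real.pi)), deriv a.g x ≠ 0) ∧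
    (4 ≤ n → ∀ i, e (e i) ≠ i) := by
  have hp : (0 : ℝ) < 2 * Real.pi := by positivity
  obtain ⟨m, rfl⟩ : ∃ m, n = m + 1 := ⟨n - 1, by have := a.n_pos; omega⟩
  refine ⟨finRotate (m + 1), fun i => ?_, ?_⟩
  · by_cases hi : i = Fin.last m
    · refine ⟨1, ?_, ?_⟩
      · have h1 := (a.theta_mem i).2
        have h2 := (a.theta_mem (finRotate (m + 1) i)).1
        push_cast; linarith
      · intro x hx h0
        subst hi
        rw [finRotate_last] at hx
        obtain ⟨j, k, rfl⟩ := a.crit_all h0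
        have h3 := (a.theta_mem j)
        have h4 : a.θ j ≤ a.θ (Fin.last m) := a.theta_mono.monotone (Fin.le_last j)
        have h5 : a.θ 0 ≤ a.θ j := a.theta_mono.monotone (Fin.zero_le j)
        obtain ⟨hx1, hx2⟩ := hx
        push_cast at hx2
        have : (0 : ℝ) < k := by
          by_contra hcon
          rw [not_lt] at hcon
          nlinarith
        have : (k : ℝ) < 1 := by
          by_contra hcon
          rw [not_lt] at hcon
          nlinarith
        have h6 : 0 < k := by exact_mod_cast ‹(0:ℝ) < k›
        have h7 : k < 1 := by exact_mod_cast this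
        omega
    · refine ⟨0, ?_, ?_⟩
      · simp only [Int.cast_zero, zero_mul, add_zero]
        apply a.theta_mono
        rw [Fin.lt_def, coe_finRotate_of_ne_last hi]; omega
      · intro x hx h0
        simp only [Int.cast_zero, zero_mul, add_zero] at hx
        obtain ⟨j, rfl⟩ := a.crit_only x ⟨by linarith [hx.1, (a.theta_mem i).1],
          by linarith [hx.2, (a.theta_mem (finRotate (m+1) i)).2]⟩ h0
        have h1 := a.theta_mono.lt_iff_lt.1 hx.1
        have h2 := a.theta_mono.lt_iff_lt.1 hx.2
        rw [Fin.lt_def] at h1 h2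
        rw [coe_finRotate_of_ne_last hi] at h2
        omega
  · intro hn i h
    simp only [finRotate_apply] at h
    have := congrArg Fin.val h
    have hi := i.2
    rw [Fin.val_add, Fin.val_add, Fin.val_one'] at this
    rw [Nat.mod_eq_of_lt (show 1 < m + 1 by omega)] at this
    rcases Nat.lt_or_ge (i.val + 1) (m + 1) with h1 | h1
    · rw [Nat.mod_eq_of_lt h1] at this
      rcases Nat.lt_or_ge (i.val + 1 + 1) (m + 1) with h2 | h2
      · rw [Nat.mod_eq_of_lt h2] at this; omega
      · rw [Nat.mod_eq_sub_mod h2, Nat.mod_eq_of_lt (by omega)] at this; omega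
    · rw [Nat.mod_eq_sub_mod h1, Nat.mod_eq_of_lt (show i.val + 1 - (m+1) < m + 1 by omega), Nat.mod_eq_of_lt (by omega)] at this; omega

abbrev mx (i : Fin n) : Prop := deriv (deriv a.g) (a.θ i) < 0

lemma not_mx {i : Fin n} : ¬ a.mx i ↔ 0 < deriv (deriv a.g) (a.θ i) := by
  have := a.node_nondeg i
  constructor
  · intro h; exact lt_of_le_of_ne (not_lt.1 h) this.symm
  · intro h; exact h.not_gt

lemma alternation : ∃ e : Equiv.Perm (Fin n), (∀ i, a.mx i → ¬ a.mx (e i) ∧ a.g (a.θ (e i)) < a.g (a.θ i)) ∧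
    (∀ i, ¬ a.mx i → a.mx (e i) ∧ a.g (a.θ i) < a.g (a.θ (e i))) ∧
    (4 ≤ n → ∀ i, e (e i) ≠ i) := by
  obtain ⟨e, he, he2⟩ := a.succ_exists
  refine ⟨e, fun i hi => ?_, fun i hi => ?_, he2⟩
  · obtain ⟨k, h1, h2⟩ := he i
    have := alt_lem a.smooth_g h1 (a.node_crit i) (by rw [dg_shift, a.node_crit])
      (by rw [ddg_shift]; exact a.node_nondeg _) h2 hi
    rw [ddg_shift, g_shift] at this
    exact ⟨a.not_mx.2 this.1, this.2⟩
  · obtain ⟨k, h1, h2⟩ := he i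
    have := alt_lem' a.smooth_g h1 (a.node_crit i) (by rw [dg_shift, a.node_crit])
      (by rw [ddg_shift]; exact a.node_nondeg _) h2 (a.not_mx.1 hi)
    rw [ddg_shift, g_shift] at this
    exact this

open Classical in
lemma card_mx : (Finset.univ.filter fun i => a.mx i).card = (Finset.univ.filter fun i => ¬ a.mx i).card := by
  obtain ⟨e, h1, h2, -⟩ := a.alternation
  apply le_antisymm
  · exact Finset.card_le_card_of_injOn e (by intro i hi; simp at hi ⊢; exact not_lt.1 (h1 i hi).1) e.injective.injOn
  · exact Finset.card_le_card_of_injOn e (by intro i hi; simp at hi ⊢; exact (h2 i (not_lt.2 hi)).1) e.injective.injOn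

open Classical in
lemma card_mx2 : 2 * (Finset.univ.filter fun i => ¬ a.mx i).card = n := by
  have := Finset.card_filter_add_card_filter_not (s := (Finset.univ : Finset (Fin n))) (fun i => a.mx i)
  rw [a.card_mx] at this
  simp only [Finset.card_univ, Fintype.card_fin] at this
  omega

/-- number of negative nodes -/
def neg : Finset (Fin n) := Finset.univ.filter fun i => a.ν i = -1

lemma sigma_neg : a.sigma = n - 2 * (a.neg.card : ℤ) := by
  have : ∀ i, a.ν i = 1 - 2 * (if a.ν i = -1 then 1 else 0) := by
    intro i; rcases a.nu_sign i with h | h <;> simp [h]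
  rw [sigma, Finset.sum_congr rfl (fun i _ => this i), Finset.sum_sub_distrib, ← Finset.mul_sum,
    Finset.sum_boole]
  simp [neg]

lemma sigma_half : a.sigma / 2 = (a.minpos.card : ℤ) - a.maxneg.card := by
  classical
  have h1 := a.sigma_neg
  have h2 := a.card_mx2
  have h3 : a.neg.card = a.maxneg.card + (Finset.univ.filter fun i => ¬ a.mx i ∧ a.ν i = -1).card := by
    rw [← Finset.card_union_of_disjoint]
    · congr 1; ext i; simp only [neg, maxneg, Finset.mem_union, Finset.mem_filter, Finset.mem_univ, true_and]
      tauto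
    · rw [maxneg, Finset.disjoint_filter]; tauto
  have h4 : (Finset.univ.filter fun i => ¬ a.mx i).card = a.minpos.card + (Finset.univ.filter fun i => ¬ a.mx i ∧ a.ν i = -1).card := by
    rw [← Finset.card_union_of_disjoint]
    · congr 1; ext i; simp only [minpos, Finset.mem_union, Finset.mem_filter, Finset.mem_univ, true_and, ← a.not_mx]
      have := a.nu_sign i
      tauto
    · rw [minpos, Finset.disjoint_filter]; rintro i - ⟨-, h⟩ ⟨-, h'⟩; omega
  omega

theorem lower {f : E2 → ℝ} (hf : IsExtension a f) :
    ((1 - a.sigma / 2).toNat : ℕ∞) ≤ (critPts f).encard := by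
  by_cases hfin : (critPts f).Finite
  · have := lower_core hf hfin
    rw [← hfin.cast_ncard_eq, sigma_half]
    refine Nat.cast_le.2 ?_
    omega
  · rw [Set.Infinite.encard_eq hfin]; exact le_top

end Ribbon


lemma hom_contDiff (d : ℕ) : ∀ {F : Type} [NormedAddCommGroup F] [NormedSpace ℝ F] (H : E2 → F),
    (∀ t : ℝ, 0 < t → ∀ x, H (t • x) = t ^ (d + 1) • H x) →
    (∀ x, x ≠ 0 → ContDiffAt ℝ (⊤ : ℕ∞) H x) → ContDiff ℝ d H := by
  have key : ∀ (d : ℕ) {F : Type} [NormedAddCommGroup F] [NormedSpace ℝ F] (H : E2 → F),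
    (∀ t : ℝ, 0 < t → ∀ x, H (t • x) = t ^ (d + 1) • H x) →
    (∀ x, x ≠ 0 → ContDiffAt ℝ (⊤ : ℕ∞) H x) →
    H 0 = 0 ∧ ∃ C : ℝ, ∀ x, ‖H x‖ ≤ C * ‖x‖ ^ (d + 1) := by
    intro d F _ _ H hh hs
    have h0 : H 0 = 0 := by
      have := hh 2 (by norm_num) 0
      rw [smul_zero] at this
      have h2 : ((2 : ℝ) ^ (d + 1) - 1) • H 0 = 0 := by rw [sub_smul, one_smul, ← this, sub_self]
      rcases smul_eq_zero.1 h2 with h3 | h3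
      · exfalso
        have : (1 : ℝ) < 2 ^ (d + 1) := one_lt_pow₀ (by norm_num) (by omega)
        linarith
      · exact h3
    refine ⟨h0, ?_⟩
    have hc : ContinuousOn H (Metric.sphere (0 : E2) 1) := fun x hx =>
      (hs x (fun h => by simp [h] at hx)).continuousAt.continuousWithinAt
    obtain ⟨C, hC⟩ := (isCompact_sphere (0 : E2) 1).exists_bound_of_continuousOn hc
    refine ⟨C, fun x => ?_⟩
    by_cases hx : x = 0
    · simp [hx, h0]
    · have hn : 0 < ‖x‖ := norm_pos_iff.2 hx
      have h1 := hh ‖x‖ hn (‖x‖⁻¹ • x)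
      rw [smul_smul, mul_inv_cancel₀ hn.ne', one_smul] at h1
      rw [h1, norm_smul, norm_pow, norm_norm, mul_comm]
      gcongr
      apply hC
      simp [norm_smul, hn.ne']
  induction d with
  | zero =>
    intro F _ _ H hh hs
    obtain ⟨h0, C, hC⟩ := key 0 H hh hs
    rw [Nat.cast_zero, contDiff_zero, continuous_iff_continuousAt]
    intro x
    by_cases hx : x = 0
    · subst hx
      rw [ContinuousAt, h0]
      refine squeeze_zero_norm hC ?_
      have : Continuous fun x : E2 => C * ‖x‖ ^ (0 + 1) := by fun_prop
      simpa using this.tendsto 0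
    · exact (hs x hx).continuousAt
  | succ d ih =>
    intro F _ _ H hh hs
    obtain ⟨h0, C, hC⟩ := key (d + 1) H hh hs
    have hdiff : Differentiable ℝ H := by
      intro x
      by_cases hx : x = 0
      · subst hx
        refine (Asymptotics.IsBigO.hasFDerivAt (n := d + 2) ?_ (by omega)).differentiableAt
        refine Asymptotics.IsBigO.of_bound C (Filter.Eventually.of_forall fun x => ?_)
        simpa using hC x
      · exact (hs x hx).differentiableAt (by simp)
    push_cast
    rw [contDiff_succ_iff_fderiv]
    refine ⟨hdiff, by simp, ih _ ?_ ?_⟩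
    · intro t ht x
      have h1 : (fun x => H (t • x)) = fun x => t ^ (d + 2) • H x := by ext x; exact hh t ht x
      have h2 := congrArg (fun G => fderiv ℝ G x) h1
      simp only [fderiv_comp_smul] at h2
      rw [fderiv_fun_const_smul (hdiff x)] at h2
      have h3 := congrArg (fun G => t⁻¹ • G) h2
      simp only [smul_smul] at h3
      rw [inv_mul_cancel₀ ht.ne', one_smul] at h3
      rw [h3]; congr 1; field_simp; ring
    · intro x hx
      exact (hs x hx).fderiv_right (by simp)

lemma glue_smooth (G : E2 → ℝ) (hh : ∀ t : ℝ, 0 < t → ∀ x, G (t • x) = G x)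
    (hs : ∀ x, x ≠ 0 → ContDiffAt ℝ (⊤ : ℕ∞) G x) :
    ContDiff ℝ (⊤ : ℕ∞) fun x => expNegInvGlue (‖x‖ ^ 2) * G x := by
  rw [contDiff_infty]
  intro n
  have e : (fun x : E2 => expNegInvGlue (‖x‖ ^ 2) * G x) = fun x =>
      ((Polynomial.X ^ (n + 1) : Polynomial ℝ).eval (‖x‖ ^ 2)⁻¹ * expNegInvGlue (‖x‖ ^ 2)) *
        ((‖x‖ ^ 2) ^ (n + 1) * G x) := by
    ext x
    by_cases hx : x = 0
    · simp [hx]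
    · have : ‖x‖ ≠ 0 := norm_ne_zero_iff.2 hx
      simp only [Polynomial.eval_pow, Polynomial.eval_X]
      have h2 : ((‖x‖ ^ 2)⁻¹) ^ (n + 1) * (‖x‖ ^ 2) ^ (n + 1) = 1 := by
        rw [← mul_pow, inv_mul_cancel₀ (pow_ne_zero _ this), one_pow]
      linear_combination (-(expNegInvGlue (‖x‖ ^ 2) * G x)) * h2
  rw [e]
  refine ContDiff.mul ?_ ?_
  · exact ((expNegInvGlue.contDiff_polynomial_eval_inv_mul (n := ⊤) _).comp (contDiff_norm_sq ℝ)).of_le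
      (by exact_mod_cast le_top)
  · refine (hom_contDiff (2 * n + 1) _ ?_ ?_).of_le (by norm_cast; omega)
    · intro t ht x
      rw [hh t ht, norm_smul, Real.norm_eq_abs, abs_of_pos ht, smul_eq_mul]
      ring
    · intro x hx
      exact ((contDiff_norm_sq ℝ).contDiffAt.pow _).mul (hs x hx)

lemma cx_contDiff : ContDiff ℝ (⊤ : ℕ∞) cx := by
  have : cx = fun x : E2 => ((x 0 : ℝ) : ℂ) + ((x 1 : ℝ) : ℂ) * Complex.I := by
    ext x
    apply Complex.ext <;> simp [cx]
  rw [this]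
  have h : ∀ i : Fin 2, ContDiff ℝ (⊤ : ℕ∞) fun x : E2 => ((x i : ℝ) : ℂ) := fun i =>
    Complex.ofRealCLM.contDiff.comp (EuclideanSpace.proj (𝕜 := ℝ) i).contDiff
  exact (h 0).add ((h 1).mul contDiff_const)

lemma arg_smooth {z : ℂ} (hz : z ∈ Complex.slitPlane) : ContDiffAt ℝ (⊤ : ℕ∞) Complex.arg z := by
  have h1 : ContDiffAt ℝ (⊤ : ℕ∞) Complex.log z := (Complex.contDiffAt_log hz).restrict_scalars ℝ
  have h2 := Complex.imCLM.contDiff.contDiffAt.comp (n := (⊤ : ℕ∞)) z h1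
  refine h2.congr_of_eventuallyEq (Filter.Eventually.of_forall fun w => ?_)
  simp [Complex.log_im]

namespace Ribbon
variable {n : ℕ} (a : Ribbon n)

def Phi (x : E2) : ℝ := a.g (Complex.arg (cx x))

lemma Phi_hom (t : ℝ) (ht : 0 < t) (x : E2) : a.Phi (t • x) = a.Phi x := by
  rw [Phi, Phi, cx_smul, Complex.arg_real_mul _ ht]

lemma g_angle {s t : ℝ} (h : (s : Real.Angle) = t) : a.g s = a.g t := by
  obtain ⟨k, hk⟩ := Real.Angle.angle_eq_iff_two_pi_dvd_sub.1 h
  rw [show s = t + k * (2 * Real.pi) by linarith, g_shift]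

lemma Phi_sph {r : ℝ} (hr : 0 < r) (t : ℝ) : a.Phi (r • sphPt t) = a.g t := by
  rw [Phi_hom _ _ hr, Phi, cx_sphPt]
  apply a.g_angle
  rw [Complex.arg_exp_mul_I, Real.Angle.coe_toIocMod]

lemma Phi_smooth (x : E2) (hx : x ≠ 0) : ContDiffAt ℝ (⊤ : ℕ∞) a.Phi x := by
  have hx' : cx x ≠ 0 := by rw [← norm_ne_zero_iff, cx_norm]; exact norm_ne_zero_iff.2 hx
  set w := (cx x)⁻¹ with hw
  have h1 : ContDiffAt ℝ (⊤ : ℕ∞) (fun y => a.g (Complex.arg (cx y * w) - Complex.arg w)) x := by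
    refine a.smooth_g.contDiffAt.comp x (ContDiffAt.sub ?_ contDiffAt_const)
    refine ContDiffAt.comp x (arg_smooth ?_) (cx_contDiff.contDiffAt.mul contDiffAt_const)
    rw [hw, mul_inv_cancel₀ hx']; exact Complex.one_mem_slitPlane
  refine h1.congr_of_eventuallyEq ?_
  filter_upwards [isOpen_ne.mem_nhds hx] with y hy
  have hy' : cx y ≠ 0 := by rw [← norm_ne_zero_iff, cx_norm]; exact norm_ne_zero_iff.2 hy
  apply a.g_angle
  rw [Real.Angle.coe_sub, Complex.arg_mul_coe_angle hy' (inv_ne_zero hx'),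
    add_sub_cancel_right]

end Ribbon


namespace Ribbon
variable {n : ℕ} (a : Ribbon n)

def W (c : ℝ) : Finset (Fin n) := by
  classical
  exact Finset.univ.filter fun i =>
    0 < (a.ν i : ℝ) * deriv (deriv a.g) (a.θ i) * (a.g (a.θ i) - c)

lemma tang_hasDeriv {f : E2 → ℝ} (hf : Differentiable ℝ f) (r t : ℝ) :
    HasDerivAt (fun s : ℝ => f (r • sphPt s)) (fderiv ℝ f (r • sphPt t) (r • deriv sphPt t)) t := by
  have h1 : HasDerivAt (fun s : ℝ => r • sphPt s) (r • deriv sphPt t) t :=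
    ((sphPt_contDiff.differentiable (by simp)) t).hasDerivAt.const_smul r
  exact (hf (r • sphPt t)).hasFDerivAt.comp_hasDerivAt t h1

theorem construct (c : ℝ) (hc : ∀ i, a.g (a.θ i) ≠ c) :
    ∃ f : E2 → ℝ, IsExtension a f ∧ (critPts f).encard ≤ ((1 + (a.W c).card : ℕ) : ℕ∞) := by
  classical
  set v : Fin n → ℝ := fun i => a.g (a.θ i) - c with hv
  have hv0 : ∀ i, v i ≠ 0 := fun i => sub_ne_zero.2 (hc i)
  set q : Fin n → ℝ := fun i => if i ∈ a.W c then v i else 0 with hq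
  set Q : Polynomial ℝ := Lagrange.interpolate Finset.univ (fun i => a.g (a.θ i)) q with hQ
  have hQi : ∀ i, Q.eval (a.g (a.θ i)) = q i := fun i =>
    Lagrange.eval_interpolate_at_node (v := fun i => a.g (a.θ i)) q
      (fun i _ j _ h => a.values_distinct i j h) (Finset.mem_univ i)
  -- bound on the derivative of Q
  obtain ⟨C, hC⟩ : ∃ C : ℝ, ∀ t, |Q.derivative.eval (a.g t)| ≤ C := by
    have hcont : Continuous fun t => Q.derivative.eval (a.g t) :=
      Q.derivative.continuous.comp a.g_diff.continuous
    obtain ⟨C, hC⟩ := (isCompact_Icc (a := (0:ℝ)) (b := 2 * Real.pi)).exists_bound_of_continuousOn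
      hcont.continuousOn
    refine ⟨C, fun t => ?_⟩
    have hp : (0 : ℝ) < 2 * Real.pi := by positivity
    have h1 := toIcoMod_mem_Ico' hp t
    have h2 := toIcoMod_add_toIcoDiv_zsmul hp 0 t
    rw [zsmul_eq_mul] at h2
    rw [← h2, g_shift]
    exact hC _ ⟨h1.1, h1.2.le⟩
  have hC0 : 0 ≤ C := (abs_nonneg _).trans (hC 0)
  set ε : ℝ := 1 / (C + 1) with hε
  have hε0 : 0 < ε := by positivity
  have hεC : ε * C < 1 := by rw [hε]; field_simp; linarith
  obtain ⟨M, hM⟩ := exists_nat_gt (1 / ε)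
  have hM1 : 1 < ε * (M + 1) := by
    rw [div_lt_iff₀ hε0] at hM; nlinarith
  set e1 : ℝ := Real.exp 1 with he1
  have he1pos : 0 < e1 := Real.exp_pos _
  set f : E2 → ℝ := fun x => c + (e1 * (expNegInvGlue (‖x‖ ^ 2) * (a.Phi x - c + ε * Q.eval (a.Phi x))) -
    e1 * ε * ((‖x‖ ^ 2) ^ (M + 1) * (expNegInvGlue (‖x‖ ^ 2) * Q.eval (a.Phi x)))) with hf
  have hQP : ∀ x, x ≠ 0 → ContDiffAt ℝ (⊤ : ℕ∞) (fun x => Q.eval (a.Phi x)) x := fun x hx =>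
    (show ContDiff ℝ (⊤ : ℕ∞) fun x => Q.eval x by simpa only [Polynomial.coe_aeval_eq_eval] using Q.contDiff_aeval (𝕜 := ℝ) (⊤ : ℕ∞)).contDiffAt.comp x (a.Phi_smooth x hx)
  have hfs : ContDiff ℝ (⊤ : ℕ∞) f := by
    refine contDiff_const.add (ContDiff.sub (contDiff_const.mul ?_) (contDiff_const.mul
      (((contDiff_norm_sq ℝ).pow _).mul ?_)))
    · refine glue_smooth _ (fun t ht x => by rw [a.Phi_hom t ht]) fun x hx => ?_
      exact ((a.Phi_smooth x hx).sub contDiffAt_const).add (contDiffAt_const.mul (hQP x hx))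
    · exact glue_smooth _ (fun t ht x => by rw [a.Phi_hom t ht]) hQP
  have hfd : Differentiable ℝ f := hfs.differentiable (by simp)
  have hpol : ∀ r : ℝ, 0 < r → ∀ t, f (r • sphPt t) = c + e1 * Real.exp (-(r ^ 2)⁻¹) *
      (a.g t - c + ε * (1 - (r ^ 2) ^ (M + 1)) * Q.eval (a.g t)) := by
    intro r hr t
    simp only [hf]
    rw [a.Phi_sph hr, norm_smul, sphPt_norm, Real.norm_eq_abs, abs_of_pos hr, mul_one, expNegInvGlue,
      if_neg (not_le.2 (by positivity : 0 < r ^ 2))]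
    ring
  -- tangential
  have htan : ∀ r : ℝ, 0 < r → r ≤ 1 → ∀ t, fderiv ℝ f (r • sphPt t) (r • deriv sphPt t) = 0 →
      deriv a.g t = 0 := by
    intro r hr hr1 t h
    have h1 := tang_hasDeriv hfd r t
    rw [h] at h1
    have h2 : HasDerivAt (fun s => f (r • sphPt s)) (e1 * Real.exp (-(r ^ 2)⁻¹) *
      (deriv a.g t + ε * (1 - (r ^ 2) ^ (M + 1)) * (Q.derivative.eval (a.g t) * deriv a.g t))) t := by
      have h3 : (fun s => f (r • sphPt s)) = fun t => c + e1 * Real.exp (-(r ^ 2)⁻¹) *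
        (a.g t - c + ε * (1 - (r ^ 2) ^ (M + 1)) * Q.eval (a.g t)) := by ext s; exact hpol r hr s
      rw [h3]
      have h4 := (a.g_diff t).hasDerivAt
      exact (((h4.sub_const c).add (((Q.hasDerivAt (a.g t)).comp t h4).const_mul _)).const_mul _).const_add _
    have h3 := h1.unique h2
    have h5 : (r ^ 2) ^ (M + 1) ≤ 1 := pow_le_one₀ (by positivity) (by nlinarith)
    have h6 : 0 ≤ (r ^ 2) ^ (M + 1) := by positivity
    have h7 : 0 < 1 + ε * (1 - (r ^ 2) ^ (M + 1)) * Q.derivative.eval (a.g t) := by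
      have h8 := (abs_le.1 (hC t)).1
      have h9 : ε * (1 - (r ^ 2) ^ (M + 1)) ≤ ε := by nlinarith
      have h10 : 0 ≤ ε * (1 - (r ^ 2) ^ (M + 1)) := mul_nonneg hε0.le (by linarith)
      nlinarith
    have h8 : (e1 * Real.exp (-(r ^ 2)⁻¹) * (1 + ε * (1 - (r ^ 2) ^ (M + 1)) * Q.derivative.eval (a.g t)))
      * deriv a.g t = 0 := by linear_combination -h3
    rcases mul_eq_zero.1 h8 with h | h
    · exfalso; have : 0 < e1 * Real.exp (-(r ^ 2)⁻¹) * (1 + ε * (1 - (r ^ 2) ^ (M + 1)) * Q.derivative.eval (a.g t)) := by positivity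
      exact this.ne' h
    · exact h
  -- radial
  have hrad : ∀ r : ℝ, 0 < r → ∀ i, fderiv ℝ f (r • sphPt (a.θ i)) (sphPt (a.θ i)) =
      e1 * Real.exp (-(r ^ 2)⁻¹) * (2 / r ^ 3) *
      (v i + q i * (ε - ε * (r ^ 2) ^ (M + 1) * (1 + (M + 1) * r ^ 2))) := by
    intro r hr i
    have h1 := radial_hasDeriv hfd (sphPt (a.θ i)) r
    have h2 : HasDerivAt (fun s => f (s • sphPt (a.θ i))) (e1 * (Real.exp (-(r ^ 2)⁻¹) * (2 * r / (r ^ 2) ^ 2)) *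
        (v i + ε * (1 - (r ^ 2) ^ (M + 1)) * q i) + e1 * Real.exp (-(r ^ 2)⁻¹) *
        (ε * (-((M + 1 : ℕ) * (r ^ 2) ^ M * (2 * r))) * q i)) r := by
      have h3 : (fun s => f (s • sphPt (a.θ i))) =ᶠ[nhds r] fun s => c + e1 * Real.exp (-(s ^ 2)⁻¹) *
        (v i + ε * (1 - (s ^ 2) ^ (M + 1)) * q i) := by
        filter_upwards [lt_mem_nhds hr] with s hs
        rw [hpol s hs, hQi]
      refine HasDerivAt.congr_of_eventuallyEq ?_ h3
      have h4 : HasDerivAt (fun s : ℝ => s ^ 2) (2 * r) r := by simpa using hasDerivAt_pow 2 r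
      have h5 : HasDerivAt (fun s : ℝ => -(s ^ 2)⁻¹) (2 * r / (r ^ 2) ^ 2) r := by
        have := (h4.inv (pow_ne_zero _ hr.ne')).neg
        rw [neg_div, neg_neg] at this
        exact this
      have h6 := h5.exp.const_mul e1
      have h7 : HasDerivAt (fun s : ℝ => (s ^ 2) ^ (M + 1)) ((M + 1 : ℕ) * (r ^ 2) ^ M * (2 * r)) r := by
        simpa using h4.fun_pow (M + 1)
      exact (h6.mul ((((h7.const_sub 1).const_mul ε).mul_const (q i)).const_add (v i))).const_add c
    rw [h1.unique h2]
    push_cast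
    field_simp
    ring
  -- sign at the circle
  have hsign : ∀ i, (a.ν i : ℝ) * deriv (deriv a.g) (a.θ i) * fderiv ℝ f (sphPt (a.θ i)) (sphPt (a.θ i)) < 0 := by
    intro i
    have h1 := hrad 1 one_pos i
    rw [one_smul] at h1
    rw [h1]
    have hn : (a.ν i : ℝ) ≠ 0 := by rcases a.nu_sign i with h | h <;> rw [h] <;> norm_num
    have hA : 0 < e1 * Real.exp (-((1:ℝ) ^ 2)⁻¹) * (2 / 1 ^ 3) := by positivity
    set A := e1 * Real.exp (-((1:ℝ) ^ 2)⁻¹) * (2 / 1 ^ 3)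
    by_cases hi : i ∈ a.W c
    · have hqi : q i = v i := by rw [hq]; simp [hi]
      have hi' : 0 < (a.ν i : ℝ) * deriv (deriv a.g) (a.θ i) * v i := by
        simpa [W] using hi
      rw [hqi]
      have : (a.ν i : ℝ) * deriv (deriv a.g) (a.θ i) * (A * (v i + v i * (ε - ε * (1 ^ 2) ^ (M + 1) * (1 + (M + 1) * 1 ^ 2))))
        = (A * ((a.ν i : ℝ) * deriv (deriv a.g) (a.θ i) * v i)) * (1 - ε * (M + 1)) := by
        rw [one_pow, one_pow]; ring
      rw [this]
      exact mul_neg_of_pos_of_neg (by positivity) (by linarith)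
    · have hqi : q i = 0 := by rw [hq]; simp [hi]
      have hi' : (a.ν i : ℝ) * deriv (deriv a.g) (a.θ i) * v i ≤ 0 := by
        simpa [W] using hi
      have hi2 : (a.ν i : ℝ) * deriv (deriv a.g) (a.θ i) * v i ≠ 0 :=
        mul_ne_zero (mul_ne_zero hn (a.node_nondeg i)) (hv0 i)
      have hi3 := lt_of_le_of_ne hi' hi2
      rw [hqi]
      nlinarith
  -- every critical point off the origin lies over a node
  have hnode : ∀ x : E2, x ≠ 0 → ‖x‖ ≤ 1 → fderiv ℝ f x = 0 → ∃ i, x = ‖x‖ • sphPt (a.θ i) := by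
    intro x hx hx1 h0
    have hr : 0 < ‖x‖ := norm_pos_iff.2 hx
    have hp := polar x
    have h1 := htan ‖x‖ hr hx1 (Complex.arg (cx x)) (by rw [← hp, h0]; rfl)
    obtain ⟨i, k, hik⟩ := a.crit_all h1
    refine ⟨i, ?_⟩
    rw [hik, sphPt_periodic] at hp
    exact hp
  -- unique radius
  obtain ⟨r0, hr0⟩ : ∃ r0 : ℝ, ∀ r, 0 < r → ε * (r ^ 2) ^ (M + 1) * (1 + (M + 1) * r ^ 2) = 1 + ε → r = r0 := by
    by_cases hex : ∃ r : ℝ, 0 < r ∧ ε * (r ^ 2) ^ (M + 1) * (1 + (M + 1) * r ^ 2) = 1 + ε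
    · obtain ⟨r0, h0, h1⟩ := hex
      have mono : ∀ r s : ℝ, 0 < r → r < s → ε * (r ^ 2) ^ (M + 1) * (1 + (M + 1) * r ^ 2) <
          ε * (s ^ 2) ^ (M + 1) * (1 + (M + 1) * s ^ 2) := by
        intro r s hr hrs
        have h2 : r ^ 2 < s ^ 2 := by gcongr
        gcongr
      refine ⟨r0, fun r hr h => ?_⟩
      rcases lt_trichotomy r r0 with h3 | h3 | h3
      · have := mono _ _ hr h3; linarith
      · exact h3
      · have := mono _ _ h0 h3; linarith
    · exact ⟨0, fun r hr h => absurd ⟨r, hr, h⟩ hex⟩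
  have hsub : critPts f ⊆ ((insert 0 ((a.W c).image fun i => r0 • sphPt (a.θ i)) : Finset E2) : Set E2) := by
    rintro x ⟨hx1, hx2⟩
    rw [Finset.coe_insert, Set.mem_insert_iff]
    by_cases hx : x = 0
    · left; exact hx
    right
    rw [mem_ball_zero_iff] at hx1
    obtain ⟨i, hi⟩ := hnode x hx hx1.le hx2
    have hr : 0 < ‖x‖ := norm_pos_iff.2 hx
    have h1 := hrad ‖x‖ hr i
    rw [← hi, hx2] at h1
    have h2 : v i + q i * (ε - ε * (‖x‖ ^ 2) ^ (M + 1) * (1 + (M + 1) * ‖x‖ ^ 2)) = 0 := by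
      rcases mul_eq_zero.1 h1.symm with h | h
      · exfalso
        have : 0 < e1 * Real.exp (-(‖x‖ ^ 2)⁻¹) * (2 / ‖x‖ ^ 3) := by positivity
        exact this.ne' h
      · exact h
    by_cases hiW : i ∈ a.W c
    · have hqi : q i = v i := by rw [hq]; simp [hiW]
      rw [hqi] at h2
      have h3 : v i * (1 + ε - ε * (‖x‖ ^ 2) ^ (M + 1) * (1 + (M + 1) * ‖x‖ ^ 2)) = 0 := by
        linear_combination h2
      have h4 := (mul_eq_zero.1 h3).resolve_left (hv0 i)
      have h5 := hr0 ‖x‖ hr (by linarith)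
      rw [h5] at hi
      rw [Finset.mem_coe, Finset.mem_image]
      exact ⟨i, hiW, hi.symm⟩
    · have hqi : q i = 0 := by rw [hq]; simp [hiW]
      rw [hqi] at h2
      exact absurd (by linarith) (hv0 i)
  refine ⟨f, ⟨hfs, ?_, ?_, ?_⟩, ?_⟩
  · intro t
    have := hpol 1 one_pos t
    rw [one_smul] at this
    rw [this, one_pow, one_pow, inv_one, he1, ← Real.exp_add]
    simp
  · intro x hx h0
    rw [mem_sphere_zero_iff_norm] at hx
    obtain ⟨i, hi⟩ := hnode x (by rintro rfl; simp at hx) hx.le h0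
    rw [hx, one_smul] at hi
    have := hsign i
    rw [← hi, h0] at this
    simp at this
  · intro i
    have h1 := hsign i
    rw [inner_grad]
    constructor
    · intro h
      by_contra hcon
      nlinarith
    · intro h
      by_contra hcon
      nlinarith
  · refine (Set.encard_le_encard hsub).trans ?_
    rw [Set.encard_coe_eq_coe_finsetCard]
    refine Nat.cast_le.2 ?_
    refine (Finset.card_insert_le _ _).trans ?_
    have := Finset.card_image_le (s := a.W c) (f := fun i => r0 • sphPt (a.θ i))
    omega

end Ribbon


lemma cut_smooth (w : ContDiffBump (0 : ℝ)) (hw : w.rOut < 1) (k : ℝ → ℝ)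
    (hk : ∀ x : ℝ, |x| < 1 → ContDiffAt ℝ (⊤ : ℕ∞) k x) :
    ContDiff ℝ (⊤ : ℕ∞) fun x => w x * k x := by
  rw [contDiff_iff_contDiffAt]
  intro x
  by_cases hx : |x| < 1
  · exact w.contDiffAt.mul (hk x hx)
  · rw [not_lt] at hx
    have : (fun x => w x * k x) =ᶠ[nhds x] fun _ => 0 := by
      have h1 : ∀ᶠ y in nhds x, w.rOut < |y| :=
        continuous_abs.continuousAt.eventually (lt_mem_nhds (by linarith))
      filter_upwards [h1] with y hy
      rw [w.zero_of_le_dist (by simpa using hy.le), zero_mul]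
    exact contDiffAt_const.congr_of_eventuallyEq this

lemma half_smooth (w : ContDiffBump (0 : ℝ)) (P : ℝ → Prop) [DecidablePred P]
    (hP : ∀ x, x ≠ 0 → (∀ᶠ y in nhds x, P y) ∨ ∀ᶠ y in nhds x, ¬ P y) :
    ContDiff ℝ (⊤ : ℕ∞) fun x => if P x then 1 - w x else 0 := by
  rw [contDiff_iff_contDiffAt]
  intro x
  by_cases hx : x = 0
  · subst hx
    have : (fun x => if P x then 1 - w x else 0) =ᶠ[nhds 0] fun _ => 0 := by
      filter_upwards [w.eventuallyEq_one] with y hy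
      rw [hy]; simp
    exact contDiffAt_const.congr_of_eventuallyEq this
  · rcases hP x hx with h | h
    · refine ((contDiffAt_const (c := (1 : ℝ))).sub w.contDiffAt).congr_of_eventuallyEq ?_
      filter_upwards [h] with y hy; rw [if_pos hy]
    · refine (contDiffAt_const (c := (0 : ℝ))).congr_of_eventuallyEq ?_
      filter_upwards [h] with y hy; rw [if_neg hy]

lemma gcore {h : ℝ → ℝ} (hs : ContDiff ℝ (⊤ : ℕ∞) h) (hper : Function.Periodic h (2 * Real.pi))
    {d : ℝ} (hd0 : 0 < d) (hdpi : d < Real.pi) (hpos : ∀ x ∈ Set.Ioo (-d) d, 0 < deriv h x)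
    (hneg : ∀ x ∈ Set.Ioo d (2 * Real.pi - d), deriv h x < 0) :
    ∃ F : ℝ → ℝ → ℝ, ContDiff ℝ (⊤ : ℕ∞) (fun p : ℝ × ℝ => F p.1 p.2) ∧
      (∀ τ, F (Real.cos τ) (Real.sin τ) = h τ) ∧
      ∀ x y, x ^ 2 + y ^ 2 ≤ 1 → ∃ D > 0, HasDerivAt (F x) D y := by
  classical
  have hdiff : Differentiable ℝ h := hs.differentiable (by simp)
  have hpi := Real.pi_pos
  have hmono : StrictMonoOn h (Set.Icc (-d) d) :=
    strictMonoOn_of_deriv_pos (convex_Icc _ _) hdiff.continuous.continuousOn (by rw [interior_Icc]; exact hpos)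
  have hanti : StrictAntiOn h (Set.Icc d (2 * Real.pi - d)) :=
    strictAntiOn_of_deriv_neg (convex_Icc _ _) hdiff.continuous.continuousOn (by rw [interior_Icc]; exact hneg)
  have hodd : ∀ τ, 0 < τ → τ < Real.pi → h (-τ) < h τ := by
    intro τ h0 h1
    rcases le_or_gt τ d with h2 | h2
    · exact hmono ⟨by linarith, by linarith⟩ ⟨by linarith, h2⟩ (by linarith)
    · rw [← hper (-τ)]
      exact hanti ⟨h2.le, by linarith⟩ ⟨by linarith, by linarith⟩ (by linarith)
  set d0 := min d (Real.pi - d) / 2 with hd0'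
  have hm : 0 < min d (Real.pi - d) := lt_min hd0 (by linarith)
  have hm1 : min d (Real.pi - d) ≤ d := min_le_left _ _
  have hm2 : min d (Real.pi - d) ≤ Real.pi - d := min_le_right _ _
  have hdd0 : 0 < d0 := by linarith
  have hdd1 : d0 < d := by linarith
  have hdd2 : d0 < Real.pi - d := by linarith
  have hdd3 : d0 < Real.pi / 2 := by linarith
  have hc0 : 0 < Real.cos d0 := Real.cos_pos_of_mem_Ioo ⟨by linarith, hdd3⟩
  have hs0 : 0 < Real.sin d0 := Real.sin_pos_of_pos_of_lt_pi hdd0 (by linarith)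
  have hcs := Real.sin_sq_add_cos_sq d0
  have hc1 : Real.cos d0 < 1 := by nlinarith
  have hs1 : Real.sin d0 < 1 := by nlinarith
  set w : ContDiffBump (0 : ℝ) := ⟨Real.cos d0, (1 + Real.cos d0) / 2, hc0, by linarith⟩ with hw
  set u : ContDiffBump (0 : ℝ) := ⟨Real.sin d0, (1 + Real.sin d0) / 2, hs0, by linarith⟩ with hu
  have hwout : w.rOut < 1 := by rw [hw]; simp only; linarith
  have huout : u.rOut < 1 := by rw [hu]; simp only; linarith
  have hw1 : ∀ x, |x| ≤ Real.cos d0 → w x = 1 := fun x hx => w.one_of_mem_closedBall (by simpa using hx)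
  have hu1 : ∀ x, |x| ≤ Real.sin d0 → u x = 1 := fun x hx => u.one_of_mem_closedBall (by simpa using hx)
  have hw0 : ∀ x, 1 ≤ |x| → w x = 0 := fun x hx => w.zero_of_le_dist (by simp; linarith)
  set κ : ℝ → ℝ := fun y => u y * Real.arcsin y with hκ
  have hne : ∀ x : ℝ, |x| < 1 → x ≠ -1 ∧ x ≠ 1 := fun x hx => by
    rw [abs_lt] at hx; constructor <;> linarith
  have hκs : ContDiff ℝ (⊤ : ℕ∞) κ := cut_smooth u huout _ fun x hx =>
    Real.contDiffAt_arcsin (hne x hx).1 (hne x hx).2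
  have hκe : ∀ y, |y| ≤ Real.sin d0 → κ y = Real.arcsin y := fun y hy => by
    simp only [hκ]; rw [hu1 y hy, one_mul]
  have hκd : ∀ y, |y| < Real.sin d0 → ∃ D > 0, HasDerivAt κ D y := by
    intro y hy
    have hy1 : |y| < 1 := by linarith
    refine ⟨_, ?_, (Real.hasDerivAt_arcsin (hne y hy1).1 (hne y hy1).2).congr_of_eventuallyEq ?_⟩
    · have : 0 < 1 - y ^ 2 := by rw [abs_lt] at hy1; nlinarith
      positivity
    · have h1 : ∀ᶠ z in nhds y, |z| < Real.sin d0 :=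
        continuous_abs.continuousAt.eventually (gt_mem_nhds hy)
      filter_upwards [h1] with z hz
      exact hκe z hz.le
  have hκr : ∀ y, |y| < Real.sin d0 → |κ y| < d0 := by
    intro y hy
    rw [hκe y hy.le]
    rw [abs_lt] at hy ⊢
    constructor
    · rw [Real.lt_arcsin_iff_sin_lt' ⟨by linarith, by linarith⟩, Real.sin_neg]; exact hy.1
    · rw [Real.arcsin_lt_iff_lt_sin' ⟨by linarith, by linarith⟩]; exact hy.2
  set E : ℝ → ℝ := fun x => (h (Real.arccos x) + h (-Real.arccos x)) / 2 with hE
  set B : ℝ → ℝ := fun x => (h (Real.arccos x) - h (-Real.arccos x)) / (2 * √(1 - x ^ 2)) with hB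
  have hac : ∀ x : ℝ, |x| < 1 → ContDiffAt ℝ (⊤ : ℕ∞) (fun x => h (Real.arccos x)) x := fun x hx =>
    hs.contDiffAt.comp x (Real.contDiffAt_arccos (hne x hx).1 (hne x hx).2)
  have hac' : ∀ x : ℝ, |x| < 1 → ContDiffAt ℝ (⊤ : ℕ∞) (fun x => h (-Real.arccos x)) x := fun x hx =>
    hs.contDiffAt.comp x (Real.contDiffAt_arccos (hne x hx).1 (hne x hx).2).neg
  have hx2 : ∀ x : ℝ, |x| < 1 → 0 < 1 - x ^ 2 := fun x hx => by rw [abs_lt] at hx; nlinarith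
  have hm0 : ContDiff ℝ (⊤ : ℕ∞) fun x => w x * E x := cut_smooth w hwout _ fun x hx =>
    ((hac x hx).add (hac' x hx)).div_const 2
  have hm1 : ContDiff ℝ (⊤ : ℕ∞) fun x => w x * B x := cut_smooth w hwout _ fun x hx => by
    refine ((hac x hx).sub (hac' x hx)).div (contDiffAt_const.mul (ContDiffAt.sqrt ?_ (hx2 x hx).ne')) ?_
    · exact (contDiff_const.sub (contDiff_id.pow 2)).contDiffAt
    · have := Real.sqrt_pos.2 (hx2 x hx); positivity
  have hBpos : ∀ x : ℝ, |x| < 1 → 0 < B x := by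
    intro x hx
    have h1 := Real.sqrt_pos.2 (hx2 x hx)
    have h2 := hodd (Real.arccos x) (Real.arccos_pos.2 (abs_lt.1 hx).2) (by
      rw [← Real.arccos_neg_one]
      exact Real.strictAntiOn_arccos ⟨le_rfl, by norm_num⟩ ⟨(abs_lt.1 hx).1.le, (abs_lt.1 hx).2.le⟩ (abs_lt.1 hx).1)
    exact div_pos (by linarith) (by linarith)
  set wp : ℝ → ℝ := fun x => if 0 < x then 1 - w x else 0 with hwp
  set wm : ℝ → ℝ := fun x => if x < 0 then 1 - w x else 0 with hwm
  have hwps : ContDiff ℝ (⊤ : ℕ∞) wp := half_smooth w (fun x => 0 < x) fun x hx => by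
    rcases lt_or_gt_of_ne hx with h | h
    · right; filter_upwards [gt_mem_nhds h] with y hy; exact not_lt.2 hy.le
    · left; exact lt_mem_nhds h
  have hwms : ContDiff ℝ (⊤ : ℕ∞) wm := half_smooth w (fun x => x < 0) fun x hx => by
    rcases lt_or_gt_of_ne hx with h | h
    · left; exact gt_mem_nhds h
    · right; filter_upwards [lt_mem_nhds h] with y hy; exact not_lt.2 hy.le
  have hsum : ∀ x, w x + wp x + wm x = 1 := by
    intro x
    simp only [hwp, hwm]
    rcases lt_trichotomy x 0 with h | h | h
    · rw [if_neg (not_lt.2 h.le), if_pos h]; ring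
    · subst h; simp [hw1 0 (by simpa using hc0.le)]
    · rw [if_pos h, if_neg (not_lt.2 h.le)]; ring
  have hw01 : ∀ x, w x ≤ 1 := fun x => w.le_one
  have hwp0 : ∀ x, 0 ≤ wp x := fun x => by
    simp only [hwp]; split_ifs <;> [linarith [hw01 x]; exact le_rfl]
  have hwm0 : ∀ x, 0 ≤ wm x := fun x => by
    simp only [hwm]; split_ifs <;> [linarith [hw01 x]; exact le_rfl]
  have hwpn : ∀ x, wp x ≠ 0 → Real.cos d0 < x := by
    intro x hx
    by_contra hcon
    apply hx
    simp only [hwp]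
    split_ifs with h0
    · rw [hw1 x (by rw [abs_of_pos h0]; linarith), sub_self]
    · rfl
  have hwmn : ∀ x, wm x ≠ 0 → x < - Real.cos d0 := by
    intro x hx
    by_contra hcon
    apply hx
    simp only [hwm]
    split_ifs with h0
    · rw [hw1 x (by rw [abs_of_neg h0]; linarith), sub_self]
    · rfl
  refine ⟨fun x y => w x * E x + y * (w x * B x) + wp x * h (κ y) + wm x * h (Real.pi - κ y), ?_, ?_, ?_⟩
  · have c1 : ∀ k : ℝ → ℝ, ContDiff ℝ (⊤ : ℕ∞) k → ContDiff ℝ (⊤ : ℕ∞) fun p : ℝ × ℝ => k p.1 :=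
      fun k hk => hk.comp contDiff_fst
    have c2 : ∀ k : ℝ → ℝ, ContDiff ℝ (⊤ : ℕ∞) k → ContDiff ℝ (⊤ : ℕ∞) fun p : ℝ × ℝ => k p.2 :=
      fun k hk => hk.comp contDiff_snd
    exact (((c1 _ hm0).add (contDiff_snd.mul (c1 _ hm1))).add ((c1 _ hwps).mul (c2 _ (hs.comp hκs)))).add
      ((c1 _ hwms).mul (c2 _ (hs.comp (contDiff_const.sub hκs))))
  · -- reduce to τ in (-π, π]
    have base : ∀ τ, -Real.pi < τ → τ ≤ Real.pi →
      w (Real.cos τ) * E (Real.cos τ) + Real.sin τ * (w (Real.cos τ) * B (Real.cos τ)) +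
        wp (Real.cos τ) * h (κ (Real.sin τ)) + wm (Real.cos τ) * h (Real.pi - κ (Real.sin τ)) = h τ := by
      intro τ ht0 ht1
      have e1 : w (Real.cos τ) * (E (Real.cos τ) + Real.sin τ * B (Real.cos τ)) = w (Real.cos τ) * h τ := by
        rcases lt_trichotomy τ 0 with h0 | h0 | h0
        · congr 1
          have hsin : Real.sin τ < 0 := Real.sin_neg_of_neg_of_neg_pi_lt h0 ht0
          have a1 : Real.arccos (Real.cos τ) = -τ := by
            rw [← Real.cos_neg, Real.arccos_cos (by linarith) (by linarith)]
          have a2 : √(1 - Real.cos τ ^ 2) = - Real.sin τ := by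
            rw [← Real.sin_sq, Real.sqrt_sq_eq_abs, abs_of_neg hsin]
          simp only [hE, hB]
          rw [a1, a2, neg_neg]
          have hsn := hsin.ne
          field_simp
          ring
        · subst h0; rw [hw0 (Real.cos 0) (by simp)]; simp
        · rcases ht1.eq_or_lt with h1 | h1
          · subst h1; rw [hw0 (Real.cos Real.pi) (by simp)]; simp
          · congr 1
            have hsin : 0 < Real.sin τ := Real.sin_pos_of_pos_of_lt_pi h0 h1
            have a1 : Real.arccos (Real.cos τ) = τ := Real.arccos_cos (by linarith) (by linarith)
            have a2 : √(1 - Real.cos τ ^ 2) = Real.sin τ := by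
              rw [← Real.sin_sq, Real.sqrt_sq_eq_abs, abs_of_pos hsin]
            simp only [hE, hB]
            rw [a1, a2]
            field_simp
            ring
      have hsmall : ∀ σ, |σ| < d0 → κ (Real.sin σ) = σ := by
        intro σ hσ
        rw [abs_lt] at hσ
        rw [hκe, Real.arcsin_sin (by linarith) (by linarith)]
        rw [abs_le, ← Real.sin_neg]
        constructor <;> apply Real.sin_le_sin_of_le_of_le_pi_div_two <;> linarith
      have hcosabs : ∀ σ, |σ| ≤ Real.pi → Real.cos d0 < Real.cos σ → |σ| < d0 := by
        intro σ h1 h2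
        by_contra hcon
        rw [not_lt] at hcon
        have := Real.cos_le_cos_of_nonneg_of_le_pi hdd0.le h1 hcon
        rw [Real.cos_abs] at this
        linarith
      have e2 : wp (Real.cos τ) * h (κ (Real.sin τ)) = wp (Real.cos τ) * h τ := by
        by_cases h0 : wp (Real.cos τ) = 0
        · rw [h0]; simp
        · rw [hsmall τ (hcosabs τ (abs_le.2 ⟨ht0.le, ht1⟩) (hwpn _ h0))]
      have e3 : wm (Real.cos τ) * h (Real.pi - κ (Real.sin τ)) = wm (Real.cos τ) * h τ := by
        by_cases h0 : wm (Real.cos τ) = 0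
        · rw [h0]; simp
        · have h1 := hwmn _ h0
          congr 1
          rcases le_or_gt 0 τ with h2 | h2
          · rw [← Real.sin_pi_sub, hsmall _ (hcosabs _ (abs_le.2 ⟨by linarith, by linarith⟩) (by
              rw [Real.cos_pi_sub]; linarith))]
            congr 1; ring
          · have : Real.sin τ = Real.sin (-Real.pi - τ) := by
              rw [show -Real.pi - τ = -(τ + Real.pi) by ring, Real.sin_neg, Real.sin_add_pi, neg_neg]
            rw [this, hsmall _ (hcosabs _ (abs_le.2 ⟨by linarith, by linarith⟩) (by
              rw [show -Real.pi - τ = -(τ + Real.pi) by ring, Real.cos_neg, Real.cos_add_pi]; linarith)),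
              ← hper τ]
            congr 1; ring
      linear_combination e1 + e2 + e3 + h τ * hsum (Real.cos τ)
    intro τ
    have hp : (0 : ℝ) < 2 * Real.pi := by positivity
    have h1 := toIocMod_mem_Ioc hp (-Real.pi) τ
    have h2 := toIocMod_add_toIocDiv_zsmul hp (-Real.pi) τ
    rw [zsmul_eq_mul] at h2
    set σ := toIocMod hp (-Real.pi) τ
    have h3 := base σ h1.1 (by linarith [h1.2])
    rw [← h2, Real.cos_add_int_mul_two_pi, Real.sin_add_int_mul_two_pi, hper.int_mul]
    exact h3
  · intro x y hxy
    have hy : ∀ z : ℝ, Real.cos d0 ^ 2 < z → z = x ^ 2 → |y| < Real.sin d0 := by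
      intro z h1 h2
      apply abs_lt_of_sq_lt_sq _ hs0.le
      nlinarith
    have hder : ∀ D, HasDerivAt κ D y → HasDerivAt (fun y => w x * E x + y * (w x * B x) + wp x * h (κ y) +
        wm x * h (Real.pi - κ y)) (w x * B x + wp x * (deriv h (κ y) * D) +
          wm x * (deriv h (Real.pi - κ y) * (-D))) y := by
      intro D hD
      have h1 := ((hdiff (κ y)).hasDerivAt.comp y hD).const_mul (wp x)
      have h2 := ((hdiff (Real.pi - κ y)).hasDerivAt.comp y (hD.const_sub Real.pi)).const_mul (wm x)
      have h3 := ((hasDerivAt_id y).mul_const (w x * B x)).const_add (w x * E x)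
      rw [one_mul] at h3
      exact (h3.add h1).add h2
    have hwnn : 0 ≤ w x := w.nonneg
    have hsx := hsum x
    have hmid : 0 ≤ w x * B x ∧ (w x ≠ 0 → 0 < w x * B x) := by
      by_cases h0 : w x = 0
      · simp [h0]
      · have h1 : |x| < 1 := by by_contra hcon; exact h0 (hw0 x (not_lt.1 hcon))
        have h2 : 0 < w x := lt_of_le_of_ne hwnn (Ne.symm h0)
        have := mul_pos h2 (hBpos x h1)
        exact ⟨this.le, fun _ => this⟩
    by_cases hcase : Real.cos d0 ^ 2 < x ^ 2
    · have hyy := hy _ hcase rfl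
      obtain ⟨D, hD, hD'⟩ := hκd y hyy
      refine ⟨_, ?_, hder D hD'⟩
      have hk := abs_lt.1 (hκr y hyy)
      have p1 : 0 < deriv h (κ y) * D := mul_pos (hpos _ ⟨by linarith, by linarith⟩) hD
      have p2 : 0 < deriv h (Real.pi - κ y) * (-D) :=
        mul_pos_of_neg_of_neg (hneg _ ⟨by linarith, by linarith⟩) (by linarith)
      have q1 := mul_nonneg (hwp0 x) p1.le
      have q2 := mul_nonneg (hwm0 x) p2.le
      by_cases h0 : w x = 0
      · rcases (hwp0 x).eq_or_lt with h1 | h1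
        · have h2 : wm x = 1 := by linarith
          rw [h2, one_mul]; linarith [hmid.1]
        · have := mul_pos h1 p1; linarith [hmid.1]
      · linarith [hmid.2 h0]
    · have hwp1 : wp x = 0 := by
        by_contra hcon; have := hwpn x hcon; apply hcase; nlinarith
      have hwm1 : wm x = 0 := by
        by_contra hcon; have := hwmn x hcon; apply hcase; nlinarith
      have hw1 : w x = 1 := by linarith
      refine ⟨_, ?_, hder _ ((hκs.differentiable (by simp)) y).hasDerivAt⟩
      rw [hwp1, hwm1, zero_mul, zero_mul, add_zero, add_zero]
      exact hmid.2 (by rw [hw1]; norm_num)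


lemma mono_sign {g : ℝ → ℝ} (hg : ContDiff ℝ (⊤ : ℕ∞) g) {s t : ℝ} (hst : s < t) (hlt : g s < g t)
    (h : ∀ x ∈ Set.Ioo s t, deriv g x ≠ 0) : ∀ x ∈ Set.Ioo s t, 0 < deriv g x := by
  have hd : Differentiable ℝ g := hg.differentiable (by simp)
  have hc : Continuous (deriv g) := hg.continuous_deriv (by simp)
  obtain ⟨c, hc1, hc2⟩ := exists_deriv_eq_slope g hst hd.continuous.continuousOn hd.differentiableOn
  have hcp : 0 < deriv g c := by rw [hc2]; exact div_pos (by linarith) (by linarith)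
  intro x hx
  by_contra hcon
  rw [not_lt] at hcon
  have hpre : IsPreconnected (Set.Ioo s t) := isPreconnected_Ioo
  obtain ⟨y, hy, hy2⟩ := hpre.intermediate_value hx hc1 hc.continuousOn ⟨hcon, hcp.le⟩
  exact h y hy hy2

lemma mono_sign' {g : ℝ → ℝ} (hg : ContDiff ℝ (⊤ : ℕ∞) g) {s t : ℝ} (hst : s < t) (hlt : g t < g s)
    (h : ∀ x ∈ Set.Ioo s t, deriv g x ≠ 0) : ∀ x ∈ Set.Ioo s t, deriv g x < 0 := by
  have e : deriv (fun x => - g x) = fun x => - deriv g x := by ext x; simp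
  have := mono_sign (g := fun x => - g x) hg.neg hst (by linarith) (by rw [e]; simpa using h)
  rw [e] at this
  intro x hx
  linarith [this x hx]

lemma sphPt_hasDeriv (t : ℝ) : HasDerivAt sphPt (sphPt (t + Real.pi / 2)) t := by
  have h : HasDerivAt (fun t => ![Real.cos t, Real.sin t]) ![Real.cos (t + Real.pi / 2), Real.sin (t + Real.pi / 2)] t := by
    rw [hasDerivAt_pi]
    intro i
    fin_cases i
    · simpa [Real.cos_add_pi_div_two] using Real.hasDerivAt_cos t
    · simpa [Real.sin_add_pi_div_two] using Real.hasDerivAt_sin t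
  exact ((EuclideanSpace.equiv (Fin 2) ℝ).symm.toContinuousLinearMap.hasFDerivAt.comp_hasDerivAt t h)

namespace Ribbon
variable {n : ℕ} (a : Ribbon n)

/-- two nodes, both positive: no critical points needed -/
theorem two_pos (i j : Fin n) (hij : ∀ l, l = i ∨ l = j) (hi : a.mx i) (hj : ¬ a.mx j)
    (hgt : a.g (a.θ j) < a.g (a.θ i)) (hν : ∀ l, a.ν l = 1) :
    ∃ f : E2 → ℝ, IsExtension a f ∧ critPts f = ∅ := by
  have hpi := Real.pi_pos
  have hne : a.θ i ≠ a.θ j := fun h => by rw [h] at hgt; exact lt_irrefl _ hgt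
  obtain ⟨k, hk1, hk2⟩ : ∃ k : ℤ, a.θ j < a.θ i + k * (2 * Real.pi) ∧ a.θ i + k * (2 * Real.pi) < a.θ j + 2 * Real.pi := by
    have h1 := a.theta_mem i
    have h2 := a.theta_mem j
    rcases lt_or_gt_of_ne hne with h | h
    · exact ⟨1, by push_cast; linarith [h1.1, h2.2], by push_cast; linarith⟩
    · exact ⟨0, by push_cast; linarith, by push_cast; linarith [h1.2, h2.1]⟩
  set p := a.θ i + k * (2 * Real.pi) with hp
  set q := a.θ j with hq
  have hgp : a.g p = a.g (a.θ i) := a.g_shift _ _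
  have hzero : ∀ x, deriv a.g x = 0 → ∃ m : ℤ, x = p + m * (2 * Real.pi) ∨ x = q + m * (2 * Real.pi) := by
    intro x hx
    obtain ⟨l, m, rfl⟩ := a.crit_all hx
    rcases hij l with rfl | rfl
    · exact ⟨m - k, Or.inl (by rw [hp]; push_cast; ring)⟩
    · exact ⟨m, Or.inr rfl⟩
  have hint : ∀ (m : ℤ) (b : ℤ), (b : ℝ) * (2 * Real.pi) < m * (2 * Real.pi) → b < m := by
    intro m b h
    have : (b : ℝ) < m := lt_of_mul_lt_mul_right h (by positivity)
    exact_mod_cast this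
  have hz1 : ∀ x ∈ Set.Ioo q p, deriv a.g x ≠ 0 := by
    intro x hx h0
    obtain ⟨m, h | h⟩ := hzero x h0
    · have h1 := hint 0 m (by push_cast; linarith [hx.2])
      have h2 := hint m (-1) (by push_cast; linarith [hx.1])
      omega
    · have h1 := hint m 0 (by push_cast; linarith [hx.1])
      have h2 := hint 1 m (by push_cast; linarith [hx.2])
      omega
  have hz2 : ∀ x ∈ Set.Ioo p (q + 2 * Real.pi), deriv a.g x ≠ 0 := by
    intro x hx h0
    obtain ⟨m, h | h⟩ := hzero x h0
    · have h1 := hint m 0 (by push_cast; linarith [hx.1])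
      have h2 := hint 1 m (by push_cast; linarith [hx.2])
      omega
    · have h1 := hint 1 m (by push_cast; linarith [hx.2])
      have h2 := hint m 0 (by push_cast; linarith [hx.1])
      omega
  set μ := (p + q) / 2 with hμ
  set d := (p - q) / 2 with hd
  set h : ℝ → ℝ := fun τ => a.g (τ + μ) with hh
  have hdh : ∀ x, deriv h x = deriv a.g (x + μ) := fun x => by
    rw [hh, deriv_comp_add_const]
  have hsm : ContDiff ℝ (⊤ : ℕ∞) h := a.smooth_g.comp (contDiff_id.add contDiff_const)
  obtain ⟨F, hFs, hFc, hFd⟩ := gcore (h := h) hsm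
    (fun x => by simp only [hh]; rw [add_right_comm, a.periodic_g]) (d := d)
    (by rw [hd]; linarith) (by rw [hd]; linarith)
    (fun x hx => by
      rw [hdh]
      refine mono_sign a.smooth_g hk1 (by rw [hgp]; exact hgt) hz1 _ ⟨?_, ?_⟩
      · have := hx.1; rw [hd] at this; rw [hμ]; linarith
      · have := hx.2; rw [hd] at this; rw [hμ]; linarith)
    (fun x hx => by
      rw [hdh]
      refine mono_sign' a.smooth_g hk2 (by rw [a.periodic_g, hgp]; exact hgt) hz2 _ ⟨?_, ?_⟩
      · have := hx.1; rw [hd] at this; rw [hμ]; linarith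
      · have := hx.2; rw [hd] at this; rw [hμ]; linarith)
  set f : E2 → ℝ := fun z => F (z 0 * Real.cos μ + z 1 * Real.sin μ) (z 1 * Real.cos μ - z 0 * Real.sin μ) with hf
  have hfs : ContDiff ℝ (⊤ : ℕ∞) f := by
    have hc : ∀ i : Fin 2, ContDiff ℝ (⊤ : ℕ∞) fun z : E2 => z i := fun i =>
      (EuclideanSpace.proj (𝕜 := ℝ) i).contDiff
    exact hFs.comp ((((hc 0).mul contDiff_const).add ((hc 1).mul contDiff_const)).prodMk
      (((hc 1).mul contDiff_const).sub ((hc 0).mul contDiff_const)))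
  have hfd : Differentiable ℝ f := hfs.differentiable (by simp)
  have hfg : ∀ t, f (sphPt t) = a.g t := by
    intro t
    have h1 : f (sphPt t) = F (Real.cos (t - μ)) (Real.sin (t - μ)) := by
      simp only [hf]
      rw [sphPt_zero, sphPt_one, Real.cos_sub, Real.sin_sub]
    rw [h1, hFc]; simp [hh]
  set U := sphPt (μ + Real.pi / 2) with hU
  have hup : ∀ z : E2, ‖z‖ ≤ 1 → 0 < fderiv ℝ f z U := by
    intro z hz
    have hn : z 0 ^ 2 + z 1 ^ 2 ≤ 1 := by
      have : ‖z‖ ^ 2 = z 0 ^ 2 + z 1 ^ 2 := by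
        rw [EuclideanSpace.norm_sq_eq]; simp [Fin.sum_univ_two]
      rw [← this]; nlinarith [norm_nonneg z]
    have hcs := Real.sin_sq_add_cos_sq μ
    obtain ⟨D, hD, hD'⟩ := hFd (z 0 * Real.cos μ + z 1 * Real.sin μ) (z 1 * Real.cos μ - z 0 * Real.sin μ) (by
      have : (z 0 * Real.cos μ + z 1 * Real.sin μ) ^ 2 + (z 1 * Real.cos μ - z 0 * Real.sin μ) ^ 2 =
        z 0 ^ 2 + z 1 ^ 2 := by linear_combination (z 0 ^ 2 + z 1 ^ 2) * hcs
      rw [this]; exact hn)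
    have h1 : HasDerivAt (fun s : ℝ => f (z + s • U)) (fderiv ℝ f z U) 0 := by
      have h2 : HasDerivAt (fun s : ℝ => z + s • U) U 0 := by
        simpa using ((hasDerivAt_id (0 : ℝ)).smul_const U).const_add z
      have h3 : HasFDerivAt f (fderiv ℝ f z) (z + (0 : ℝ) • U) := by
        rw [zero_smul, add_zero]; exact (hfd z).hasFDerivAt
      exact h3.comp_hasDerivAt 0 h2
    have h2 : HasDerivAt (fun s : ℝ => f (z + s • U)) D 0 := by
      have e : (fun s : ℝ => f (z + s • U)) = fun s => F (z 0 * Real.cos μ + z 1 * Real.sin μ)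
          ((z 1 * Real.cos μ - z 0 * Real.sin μ) + s) := by
        ext s
        simp only [hf, PiLp.add_apply, PiLp.smul_apply, smul_eq_mul, hU, sphPt_zero, sphPt_one,
          Real.cos_add_pi_div_two, Real.sin_add_pi_div_two]
        congr 1
        · ring
        · linear_combination s * hcs
      rw [e]
      have h3 : HasDerivAt (fun s : ℝ => (z 1 * Real.cos μ - z 0 * Real.sin μ) + s) 1 0 :=
        (hasDerivAt_id (0 : ℝ)).const_add _
      have h4 : HasDerivAt (F (z 0 * Real.cos μ + z 1 * Real.sin μ)) D
        ((z 1 * Real.cos μ - z 0 * Real.sin μ) + 0) := by rw [add_zero]; exact hD'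
      have h5 := h4.comp 0 h3
      rw [mul_one] at h5
      exact h5
    rw [h1.unique h2]; exact hD
  have hnode : ∀ τ, deriv a.g (μ + τ) = 0 →
      0 < Real.sin τ * fderiv ℝ f (sphPt (μ + τ)) (sphPt (μ + τ)) := by
    intro τ h0
    have h1 : HasDerivAt (fun t => f (sphPt t)) (fderiv ℝ f (sphPt (μ + τ)) (sphPt (μ + τ + Real.pi / 2))) (μ + τ) :=
      (hfd _).hasFDerivAt.comp_hasDerivAt _ (sphPt_hasDeriv _)
    have h2 : fderiv ℝ f (sphPt (μ + τ)) (sphPt (μ + τ + Real.pi / 2)) = 0 := by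
      rw [← h1.deriv, ← h0]; congr 1; ext t; exact hfg t
    have h3 : U = Real.sin τ • sphPt (μ + τ) + Real.cos τ • sphPt (μ + τ + Real.pi / 2) := by
      have hcs := Real.sin_sq_add_cos_sq τ
      ext l
      fin_cases l
      · simp only [hU, Fin.zero_eta, PiLp.add_apply, PiLp.smul_apply, smul_eq_mul, sphPt_zero, Real.cos_add_pi_div_two]
        rw [Real.cos_add, Real.sin_add]
        linear_combination (Real.sin μ) * hcs
      · simp only [hU, Fin.mk_one, PiLp.add_apply, PiLp.smul_apply, smul_eq_mul, sphPt_one, Real.sin_add_pi_div_two]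
        rw [Real.cos_add, Real.sin_add]
        linear_combination (-Real.cos μ) * hcs
    have h4 := hup (sphPt (μ + τ)) (sphPt_norm _).le
    rw [h3, map_add, map_smul, map_smul, h2] at h4
    simpa using h4
  have hsd : 0 < Real.sin d := Real.sin_pos_of_pos_of_lt_pi (by rw [hd]; linarith) (by rw [hd]; linarith)
  refine ⟨f, ⟨hfs, hfg, ?_, ?_⟩, ?_⟩
  · intro x hx h0
    rw [mem_sphere_zero_iff_norm] at hx
    have := hup x hx.le
    rw [h0] at this; simp at this
  · intro l
    rw [hν l, inner_grad]
    rcases hij l with rfl | rfl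
    · have h1 : μ + d = p := by rw [hμ, hd]; ring
      have h2 := hnode d (by rw [h1, hp, dg_shift, a.node_crit])
      rw [h1, hp, sphPt_periodic] at h2
      have h3 := (mul_pos_iff_of_pos_left hsd).1 h2
      refine ⟨fun _ => by simpa using h3, fun h => absurd hi h.not_gt⟩
    · have h1 : μ + -d = q := by rw [hμ, hd]; ring
      have h2 := hnode (-d) (by rw [h1, hq, a.node_crit])
      rw [h1, Real.sin_neg] at h2
      refine ⟨fun h => absurd h hj, fun _ => ?_⟩
      push_cast
      rw [one_mul]
      by_contra hcon
      rw [not_lt] at hcon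
      nlinarith
  · ext x
    simp only [critPts, Set.mem_ofPred_eq, Set.mem_empty_iff_false, iff_false, not_and]
    intro hx h0
    rw [mem_ball_zero_iff] at hx
    have := hup x hx.le
    rw [h0] at this; simp at this

theorem upper : ∃ f : E2 → ℝ, IsExtension a f ∧
    (critPts f).encard ≤ ((((n : ℤ) - 1 - a.sigma / 2).toNat : ℕ) : ℕ∞) := by
  classical
  obtain ⟨e, he1, he2, he3⟩ := a.alternation
  have hcard := a.card_mx2
  have hcard' := a.card_mx
  have hsig := a.sigma_neg
  have hnpos := a.n_pos
  set mins := Finset.univ.filter fun i => ¬ a.mx i with hmins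
  set maxs := Finset.univ.filter fun i => a.mx i with hmaxs
  have hgoal : ((n : ℤ) - 1 - a.sigma / 2).toNat + 1 = mins.card + a.neg.card := by omega
  have hfin : ∀ c : ℝ, (∀ i, a.g (a.θ i) ≠ c) → (a.W c).card + 2 ≤ mins.card + a.neg.card →
      ∃ f : E2 → ℝ, IsExtension a f ∧
    (critPts f).encard ≤ ((((n : ℤ) - 1 - a.sigma / 2).toNat : ℕ) : ℕ∞) := by
    intro c hc h
    obtain ⟨f, hf1, hf2⟩ := a.construct c hc
    exact ⟨f, hf1, hf2.trans (Nat.cast_le.2 (by omega))⟩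
  have hW : ∀ c i, i ∈ a.W c ↔ 0 < (a.ν i : ℝ) * deriv (deriv a.g) (a.θ i) * (a.g (a.θ i) - c) := by
    intro c i; simp [W]
  by_cases hn : 4 ≤ n
  · -- many nodes
    have hmne : maxs.Nonempty := Finset.card_pos.1 (by omega)
    obtain ⟨m, hm, hmin⟩ := maxs.exists_min_image (fun i => a.g (a.θ i)) hmne
    have hm' : a.mx m := (Finset.mem_filter.1 hm).2
    have hp2 : ¬ a.mx (e.symm m) := fun h => by
      have := (he1 _ h).1; rw [Equiv.apply_symm_apply] at this; exact this hm'
    have hl1 := (he1 m hm').2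
    have hl2 := (he2 _ hp2).2
    rw [Equiv.apply_symm_apply] at hl2
    have hne : e m ≠ e.symm m := fun h => he3 hn m (by rw [h, Equiv.apply_symm_apply])
    obtain ⟨c, hc, hcn⟩ : ∃ c ∈ Set.Ioo (max (a.g (a.θ (e m))) (a.g (a.θ (e.symm m)))) (a.g (a.θ m)),
        c ∉ Set.range fun i => a.g (a.θ i) :=
      ((Set.Ioo_infinite (max_lt hl1 hl2)).exists_notMem_finite (Set.finite_range _))
    have hc1 := (le_max_left _ _).trans_lt hc.1
    have hc2 := (le_max_right _ _).trans_lt hc.1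
    refine hfin c (fun i h => hcn ⟨i, h⟩) ?_
    have hsub : a.W c ⊆ a.neg ∪ ((mins.erase (e m)).erase (e.symm m)) := by
      intro i hi
      rw [hW] at hi
      rw [Finset.mem_union]
      rcases a.nu_sign i with h | h
      · right
        rw [h] at hi
        push_cast at hi
        have hnm : ¬ a.mx i := fun hmx => by
          have h1 := hmin i (Finset.mem_filter.2 ⟨Finset.mem_univ _, hmx⟩)
          have h2 : 0 < a.g (a.θ i) - c := by linarith [hc.2]
          have h3 : deriv (deriv a.g) (a.θ i) < 0 := hmx
          nlinarith
        have hpos := a.not_mx.1 hnm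
        have hgi : c < a.g (a.θ i) := by
          by_contra hcon
          nlinarith
        rw [Finset.mem_erase, Finset.mem_erase]
        refine ⟨?_, ?_, Finset.mem_filter.2 ⟨Finset.mem_univ _, hnm⟩⟩
        · rintro rfl; linarith
        · rintro rfl; linarith
      · left; exact Finset.mem_filter.2 ⟨Finset.mem_univ _, h⟩
    have h1 := (Finset.card_le_card hsub).trans (Finset.card_union_le _ _)
    have hmem1 : e m ∈ mins := Finset.mem_filter.2 ⟨Finset.mem_univ _, (he1 m hm').1⟩
    have hmem2 : e.symm m ∈ mins.erase (e m) :=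
      Finset.mem_erase.2 ⟨hne.symm, Finset.mem_filter.2 ⟨Finset.mem_univ _, hp2⟩⟩
    rw [Finset.card_erase_of_mem hmem2, Finset.card_erase_of_mem hmem1] at h1
    omega
  · have hn2 : mins.card = 1 := by omega
    obtain ⟨j, hj⟩ := Finset.card_eq_one.1 hn2
    obtain ⟨i, hi⟩ := Finset.card_eq_one.1 (hcard'.trans hn2)
    have hjj : ∀ l, ¬ a.mx l ↔ l = j := fun l => by
      have : l ∈ mins ↔ l = j := by rw [hj, Finset.mem_singleton]
      rwa [hmins, Finset.mem_filter, and_iff_right (Finset.mem_univ _)] at this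
    have hii : ∀ l, a.mx l ↔ l = i := fun l => by
      have : l ∈ maxs ↔ l = i := by rw [hi, Finset.mem_singleton]
      rwa [hmaxs, Finset.mem_filter, and_iff_right (Finset.mem_univ _)] at this
    have hij : ∀ l, l = i ∨ l = j := fun l => by
      by_cases h : a.mx l
      · left; exact (hii l).1 h
      · right; exact (hjj l).1 h
    have hmi := (hii i).2 rfl
    have hmj := (hjj j).2 rfl
    have hposj := a.not_mx.1 hmj
    have hlt : a.g (a.θ j) < a.g (a.θ i) := by
      have := he2 j hmj
      rw [(hii _).1 this.1] at this
      exact this.2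
    rcases a.nu_sign j with hνj | hνj
    · rcases a.nu_sign i with hνi | hνi
      · obtain ⟨f, hf1, hf2⟩ := a.two_pos i j hij hmi hmj hlt (fun l => by
          rcases hij l with rfl | rfl <;> assumption)
        exact ⟨f, hf1, by rw [hf2]; simp⟩
      · refine hfin (a.g (a.θ i) + 1) (fun l => ?_) ?_
        · rcases hij l with rfl | rfl <;> intro h <;> linarith
        · have hWe : a.W (a.g (a.θ i) + 1) = ∅ := by
            ext l
            simp only [Finset.notMem_empty, iff_false]
            rw [hW]
            intro h
            rcases hij l with rfl | rfl
            · rw [hνi] at h; push_cast at h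
              have : deriv (deriv a.g) (a.θ l) < 0 := hmi
              nlinarith
            · rw [hνj] at h; push_cast at h
              nlinarith
          have : 0 < a.neg.card := Finset.card_pos.2 ⟨i, Finset.mem_filter.2 ⟨Finset.mem_univ _, hνi⟩⟩
          rw [hWe, Finset.card_empty]; omega
    · refine hfin (a.g (a.θ j) - 1) (fun l => ?_) ?_
      · rcases hij l with rfl | rfl <;> intro h <;> linarith
      · have hWs : a.W (a.g (a.θ j) - 1) ⊆ a.neg.erase j := by
          intro l h
          rw [hW] at h
          rcases hij l with rfl | rfl
          · rw [Finset.mem_erase]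
            refine ⟨fun h => by rw [h] at hlt; exact lt_irrefl _ hlt, ?_⟩
            rcases a.nu_sign l with hν | hν
            · exfalso
              rw [hν] at h; push_cast at h
              have : deriv (deriv a.g) (a.θ l) < 0 := hmi
              nlinarith
            · exact Finset.mem_filter.2 ⟨Finset.mem_univ _, hν⟩
          · exfalso
            rw [hνj] at h; push_cast at h
            nlinarith
        have h1 := Finset.card_le_card hWs
        have hjn : j ∈ a.neg := Finset.mem_filter.2 ⟨Finset.mem_univ _, hνj⟩
        rw [Finset.card_erase_of_mem hjn] at h1
        have : 0 < a.neg.card := Finset.card_pos.2 ⟨j, hjn⟩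
        omega

end Ribbon

/-- Every extension of a ribbon `a` with `n` nodes and signature `σ` has at least
`1 − σ/2` critical points in the open unit disk, some extension has at most
`n − 1 − σ/2` critical points; consequently `1 − σ/2 ≤ γ(a) ≤ n − 1 − σ/2`. -/
theorem stmt_0 (n : ℕ) (a : Ribbon n) :
    (∀ f : E2 → ℝ, IsExtension a f →
      (((1 - a.sigma / 2).toNat : ℕ∞) ≤ (critPts f).encard)) ∧
    (∃ f : E2 → ℝ, IsExtension a f ∧
      (critPts f).encard ≤ ((((n : ℤ) - 1 - a.sigma / 2).toNat : ℕ) : ℕ∞)) ∧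
    (((1 - a.sigma / 2).toNat : ℕ∞) ≤ gammaR a ∧
      gammaR a ≤ ((((n : ℤ) - 1 - a.sigma / 2).toNat : ℕ) : ℕ∞)) := by
  refine ⟨fun f hf => a.lower hf, a.upper, ?_, ?_⟩
  · refine le_sInf ?_
    rintro k ⟨f, hf, rfl⟩
    exact a.lower hf
  · obtain ⟨f, hf, h⟩ := a.upper
    have h1 : gammaR a ≤ (critPts f).encard := sInf_le ⟨f, hf, rfl⟩
    exact h1.trans h
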